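/- Let K be an algebraically closed field (of arbitrary characteristic) and n, m positive integers. The ring of matrix invariants S(n,m) = K[Mat_{n,n}^m]^{GL_n} is generated as a K-algebra by the functions (X_1,...,X_m) ↦ σ_s(X_{i_1} X_{i_2} ⋯ X_{i_k}) over all s ≥ 0, k ≥ 1, and indices i_1,...,i_k ∈ {1,...,m}, where σ_s(A) denotes the s-th characteristic coefficient of the n×n matrix A, defined by det(t·I_n − A) = Σ_{j} σ_j(A)·t^j. -/

import Mathlib

section FrozenDefs
open MvPolynomial Matrix

/-- Coordinate functions of an `m`-tuple of `n × n` matrices. -/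
def matCoords {K : Type} [Field K] {n m : ℕ} (X : Fin m → Matrix (Fin n) (Fin n) K) :
    Fin m × Fin n × Fin n → K :=
  fun p => X p.1 p.2.1 p.2.2

/-- The ring of matrix semi-invariants `R(n,m) = K[Mat_{n,n}^m]^{SL_n × SL_n}`, where
`(A,B)` acts by `(X_1, …, X_m) ↦ (A X_1 B⁻¹, …, A X_m B⁻¹)`. -/
noncomputable def matrixSemiInvariants (K : Type) [Field K] (n m : ℕ) :
    Subalgebra K (MvPolynomial (Fin m × Fin n × Fin n) K) :=
  ⨅ (A : SpecialLinearGroup (Fin n) K) (B : SpecialLinearGroup (Fin n) K)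
    (X : Fin m → Matrix (Fin n) (Fin n) K),
      AlgHom.equalizer
        (aeval (matCoords fun i => A.val * X i * (B⁻¹).val))
        (aeval (matCoords X))

/-- The ring of matrix invariants `S(n,m) = K[Mat_{n,n}^m]^{GL_n}`, where `A` acts by
simultaneous conjugation. -/
noncomputable def matrixInvariants (K : Type) [Field K] (n m : ℕ) :
    Subalgebra K (MvPolynomial (Fin m × Fin n × Fin n) K) :=
  ⨅ (A : GeneralLinearGroup (Fin n) K) (X : Fin m → Matrix (Fin n) (Fin n) K),
      AlgHom.equalizer
        (aeval (matCoords fun i => A.val * X i * (A⁻¹).val))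
        (aeval (matCoords X))

end FrozenDefs

open Polynomial in
/-- one-step lemma -/
lemma tl_step {R : Type*} [CommRing R] [IsDomain R] (τ : R →+* R[X]) (g : R[X]) (r c c1 : ℕ)
    (hg0 : τ (g.coeff 0) ≠ 0) (hdeg : g.natDegree + r ≤ c1)
    (hc : (((X + C X : R[X][X]) ^ r) *
      (eval₂RingHom ((mapRingHom (C : R →+* R[X])).comp τ) (X + C X : R[X][X]) g)).natDegree ≤ c) :
    r ≤ c ∧ (τ (g.coeff 0)).natDegree + 2 * r ≤ c + c1 := by
  set Q : R[X][X] := eval₂RingHom ((mapRingHom (C : R →+* R[X])).comp τ) (X + C X : R[X][X]) g with hQ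
  let ev : R[X][X] →+* R[X] := eval₂RingHom (eval₂RingHom C (-X)) X
  have hev : ev Q = τ (g.coeff 0) := by
    have h1 : ev (X + C X) = 0 := by simp [ev]
    rw [hQ]
    change ev (eval₂ _ _ g) = _
    rw [hom_eval₂, h1, eval₂_at_zero]
    have : (ev.comp ((mapRingHom (C : R →+* R[X])).comp τ)) = τ := by
      have h2 : ev.comp (mapRingHom (C : R →+* R[X])) = RingHom.id _ := by
        ext <;> simp [ev]
      rw [← RingHom.comp_assoc, h2, RingHom.id_comp]
    rw [this]
  have hQ0 : Q ≠ 0 := by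
    intro h; rw [h, map_zero] at hev; exact hg0 hev.symm
  have hmon : (X + C X : R[X][X]).Monic := monic_X_add_C _
  rw [(hmon.pow r).natDegree_mul' hQ0, hmon.natDegree_pow, natDegree_X_add_C] at hc
  have hs : ∀ k, (Q.coeff k).natDegree ≤ g.natDegree := by
    have hpow : ∀ j k, (((X + C X : R[X][X]) ^ j).coeff k).natDegree ≤ j := by
      intro j k
      rw [coeff_X_add_C_pow]
      refine (natDegree_mul_le).trans ?_
      simp
    intro k
    rw [hQ, coe_eval₂RingHom, eval₂_eq_sum_range, finsetSum_coeff]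
    refine natDegree_sum_le_of_forall_le _ _ fun j hj => ?_
    rw [coeff_mul]
    refine natDegree_sum_le_of_forall_le _ _ fun p _ => ?_
    refine (natDegree_mul_le).trans ?_
    have := hpow j p.2
    simp only [RingHom.comp_apply, coe_mapRingHom, coeff_map, natDegree_C, zero_add]
    have := Finset.mem_range.1 hj
    omega
  have hd : (τ (g.coeff 0)).natDegree ≤ g.natDegree + Q.natDegree := by
    rw [← hev]
    simp only [ev, coe_eval₂RingHom]
    rw [eval₂_eq_sum_range]
    refine natDegree_sum_le_of_forall_le _ _ fun j hj => ?_
    refine (natDegree_mul_le).trans ?_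
    have h1 : (eval₂ C (-X) (Q.coeff j)).natDegree ≤ g.natDegree := by
      have : eval₂ C (-X) (Q.coeff j) = (Q.coeff j).comp (-X) := rfl
      rw [this]
      refine natDegree_comp_le.trans ?_
      simpa using hs j
    have h2 : ((X : R[X]) ^ j).natDegree ≤ j := by simp
    have := Finset.mem_range.1 hj
    simp only [coe_eval₂RingHom]
    omega
  constructor
  · omega
  · omega

/-- translation by a new variable -/
noncomputable def tlT (K : Type*) [Field K] (q : ℕ) :
    MvPolynomial (Fin q) K →ₐ[K] Polynomial (MvPolynomial (Fin q) K) :=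
  MvPolynomial.aeval (fun i => Polynomial.C (MvPolynomial.X i) + Polynomial.X)

lemma tlT_eval_zero {K : Type*} [Field K] {q : ℕ} (h : MvPolynomial (Fin q) K) :
    (tlT K q h).eval 0 = h := by
  have : ((Polynomial.aeval (0 : MvPolynomial (Fin q) K)).restrictScalars K).comp (tlT K q)
      = AlgHom.id K _ := by
    ext i; simp [tlT]
  have h2 := DFunLike.congr_fun this h
  simpa [Polynomial.aeval_def] using h2

lemma tlT_succ {K : Type*} [Field K] {q : ℕ} (h : MvPolynomial (Fin (q+1)) K) :
    (tlT K (q+1) h).map ((MvPolynomial.finSuccEquiv K q : MvPolynomial (Fin (q+1)) K ≃+* Polynomial (MvPolynomial (Fin q) K)) : MvPolynomial (Fin (q+1)) K →+* Polynomial (MvPolynomial (Fin q) K)) =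
    Polynomial.eval₂RingHom
      ((Polynomial.mapRingHom (Polynomial.C)).comp (tlT K q : MvPolynomial (Fin q) K →+* Polynomial (MvPolynomial (Fin q) K)))
      (Polynomial.X + Polynomial.C Polynomial.X) (MvPolynomial.finSuccEquiv K q h) := by
  induction h using MvPolynomial.induction_on with
  | C a =>
    simp [tlT, MvPolynomial.algebraMap_eq]
    simp [MvPolynomial.finSuccEquiv_apply, Polynomial.algebraMap_apply]
  | add p q hp hq => rw [map_add, Polynomial.map_add, hp, hq, map_add, map_add]
  | mul_X p i hp =>
    rw [map_mul, Polynomial.map_mul, hp, map_mul, map_mul]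
    congr 1
    refine Fin.cases ?_ (fun j => ?_) i
    · simp [tlT, MvPolynomial.finSuccEquiv_X_zero, add_comm]
    · simp [tlT, MvPolynomial.finSuccEquiv_X_succ]

lemma two_line_aux {K : Type*} [Field K] : ∀ (q : ℕ) (h : MvPolynomial (Fin q) K) (c : ℕ)
    (cc : Fin q → ℕ) (e : Fin q →₀ ℕ),
    (tlT K q h).natDegree ≤ c → (∀ e' ∈ h.support, ∀ i, e' i ≤ cc i) → e ∈ h.support →
    (∀ e' ∈ h.support, ∀ j, (∀ i, i < j → e' i = e i) → e j ≤ e' j) →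
    ∀ j : Fin q, (∑ i, if i ≤ j then e i else 0) + (∑ i, if i < j then e i else 0)
      ≤ c + ∑ i, if i < j then cc i else 0 := by
  intro q
  induction q with
  | zero => intro h c cc e _ _ _ _ j; exact j.elim0
  | succ q ih =>
    intro h c cc e hT hcc he hmin
    set fs := MvPolynomial.finSuccEquiv K q h with hfs
    have hmem : ∀ (k : ℕ) (m : Fin q →₀ ℕ), m ∈ (fs.coeff k).support ↔ m.cons k ∈ h.support := by
      intro k m
      rw [hfs, MvPolynomial.mem_support_coeff_finSuccEquiv]
    have hlow : ∀ k < e 0, fs.coeff k = 0 := by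
      intro k hk
      by_contra hne
      obtain ⟨m, hm⟩ := MvPolynomial.support_nonempty.2 hne
      have := hmin _ ((hmem k m).1 hm) 0 (fun i hi => absurd hi (Fin.not_lt_zero i))
      simp at this; omega
    obtain ⟨g, hg⟩ := (Polynomial.X_pow_dvd_iff (n := e 0) (f := fs)).2 hlow
    have htail : e.tail ∈ (fs.coeff (e 0)).support := by
      rw [hmem, Finsupp.cons_tail]; exact he
    have hg0 : g.coeff 0 = fs.coeff (e 0) := by
      rw [hg]; simp [Polynomial.coeff_X_pow_mul']
    have hne : fs.coeff (e 0) ≠ 0 := MvPolynomial.support_nonempty.1 ⟨_, htail⟩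
    have hgne : g ≠ 0 := by rintro rfl; simp at hg0; exact hne hg0.symm
    have hτ : tlT K q (g.coeff 0) ≠ 0 := by
      intro h0
      have := tlT_eval_zero (g.coeff 0)
      rw [h0, Polynomial.eval_zero, hg0] at this
      exact hne this.symm
    have hfsdeg : fs.natDegree ≤ cc 0 := by
      rw [Polynomial.natDegree_le_iff_coeff_eq_zero]
      intro N hN
      by_contra hne
      obtain ⟨m, hm⟩ := MvPolynomial.support_nonempty.2 hne
      have := hcc _ ((hmem N m).1 hm) 0
      simp at this; omega
    have hdeg : g.natDegree + e 0 ≤ cc 0 := by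
      rw [hg, Polynomial.natDegree_X_pow_mul _ hgne] at hfsdeg
      omega
    have hT' : (((Polynomial.X + Polynomial.C Polynomial.X :
        Polynomial (Polynomial (MvPolynomial (Fin q) K))) ^ (e 0)) *
      (Polynomial.eval₂RingHom ((Polynomial.mapRingHom (Polynomial.C)).comp (tlT K q : MvPolynomial (Fin q) K →+* Polynomial (MvPolynomial (Fin q) K)))
        (Polynomial.X + Polynomial.C Polynomial.X) g)).natDegree ≤ c := by
      have h1 := tlT_succ h
      rw [← hfs, hg, map_mul, map_pow] at h1
      have hX : ∀ (f : MvPolynomial (Fin q) K →+* Polynomial (Polynomial (MvPolynomial (Fin q) K)))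
          (y : Polynomial (Polynomial (MvPolynomial (Fin q) K))),
          Polynomial.eval₂RingHom f y Polynomial.X = y := fun f y => Polynomial.eval₂_X f y
      rw [hX] at h1
      rw [← h1]
      exact (Polynomial.natDegree_map_le).trans hT
    obtain ⟨hr, hd⟩ := tl_step (tlT K q : MvPolynomial (Fin q) K →+* Polynomial (MvPolynomial (Fin q) K)) g (e 0) c (cc 0) hτ hdeg hT'
    have := ih (fs.coeff (e 0)) (c + cc 0 - 2 * e 0) (fun i => cc i.succ) e.tail
      (by rw [← hg0]; change (tlT K q (g.coeff 0)).natDegree + _ ≤ _ at hd; omega)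
      (by intro e' he' i
          have := hcc _ ((hmem _ _).1 he') i.succ
          simpa using this)
      htail
      (by intro e' he' j hj
          have := hmin _ ((hmem _ _).1 he') j.succ (by
            intro i
            refine Fin.cases ?_ (fun i => ?_) i
            · intro _; simp
            · intro hi
              simpa [Finsupp.tail_apply] using hj i (Fin.succ_lt_succ_iff.1 hi))
          simpa [Finsupp.tail_apply] using this)
    intro j
    refine Fin.cases ?_ (fun j => ?_) j
    · simp
      exact hr
    · have h3 := this j
      simp only [Fin.sum_univ_succ, Finsupp.tail_apply, Fin.succ_le_succ_iff, Fin.succ_lt_succ_iff,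
        Fin.zero_le, Fin.succ_pos, if_true] at h3 ⊢
      omega

lemma two_line_inv {K : Type*} [Field K] [Infinite K] (q : ℕ) (h : MvPolynomial (Fin q) K)
    (cc : Fin q → ℕ) (e : Fin q →₀ ℕ)
    (hinv : ∀ t : K, MvPolynomial.aeval (fun i => MvPolynomial.X i + MvPolynomial.C t) h = h)
    (hcc : ∀ e' ∈ h.support, ∀ i, e' i ≤ cc i) (he : e ∈ h.support)
    (hmin : ∀ e' ∈ h.support, ∀ j, (∀ i, i < j → e' i = e i) → e j ≤ e' j) (j : Fin q) :
    (∑ i, if i ≤ j then e i else 0) + (∑ i, if i < j then e i else 0)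
      ≤ ∑ i, if i < j then cc i else 0 := by
  have h1 : tlT K q h = Polynomial.C h := by
    refine Polynomial.eq_of_infinite_eval_eq _ _ ?_
    refine Set.Infinite.mono (s := Set.range (MvPolynomial.C : K → MvPolynomial (Fin q) K)) ?_
      (Set.infinite_range_of_injective (MvPolynomial.C_injective _ _))
    rintro _ ⟨t, rfl⟩
    simp only [Set.mem_ofPred_eq, Polynomial.eval_C]
    conv_rhs => rw [← hinv t]
    have : ((Polynomial.aeval (MvPolynomial.C t : MvPolynomial (Fin q) K)).restrictScalars K).comp
        (tlT K q) = MvPolynomial.aeval (fun i => MvPolynomial.X i + MvPolynomial.C t) := by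
      ext i; simp [tlT]
    have h2 := DFunLike.congr_fun this h
    simpa [Polynomial.aeval_def] using h2
  have := two_line_aux q h 0 cc e (by rw [h1]; simp) hcc he hmin j
  simpa using this

open MvPolynomial in
lemma two_line {K : Type*} [Field K] [Infinite K] {ι : Type*} [Fintype ι] [DecidableEq ι] (q : ℕ)
    (a b : Fin q → ι) (ha : Function.Injective a) (hb : Function.Injective b)
    (hab : ∀ i j, a i ≠ b j) (α : K → ι → MvPolynomial ι K)
    (hα1 : ∀ t i, α t (b i) = X (b i) + C t * X (a i))
    (hα2 : ∀ t v, (∀ i, b i ≠ v) → α t v = X v)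
    (G : MvPolynomial ι K) (hinv : ∀ t, aeval (α t) G = G) (e : ι →₀ ℕ) (he : e ∈ G.support)
    (hmin : ∀ e' ∈ G.support, (∀ v, (∀ i, a i ≠ v) → (∀ i, b i ≠ v) → e' v = e v) →
      (∀ i, e' (a i) + e' (b i) = e (a i) + e (b i)) →
      ∀ j, (∀ i, i < j → e' (b i) = e (b i)) → e (b j) ≤ e' (b j)) (j : Fin q) :
    (∑ i, if i ≤ j then e (b i) else 0) ≤ ∑ i, if i < j then e (a i) else 0 := by
  classical
  let β : ι → Option (Fin q) := Function.partialInv b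
  have hβ1 : ∀ i, β (b i) = some i := fun i => Function.partialInv_left hb i
  have hβ2 : ∀ v, (∀ i, b i ≠ v) → β v = none := by
    intro v hv
    by_contra hne
    obtain ⟨i, hi⟩ := Option.ne_none_iff_exists'.1 hne
    exact hv i ((Function.Injective.isPartialInv hb i v).1 hi)
  let ρ : ι → ι := fun v => (β v).elim v a
  let sp : ι → Fin q →₀ ℕ := fun v => (β v).elim 0 (fun i => Finsupp.single i 1)
  have hρ1 : ∀ i, ρ (b i) = a i := fun i => by simp [ρ, hβ1]
  have hρ2 : ∀ v, (∀ i, b i ≠ v) → ρ v = v := fun v hv => by simp [ρ, hβ2 v hv]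
  have hsp1 : ∀ i, sp (b i) = Finsupp.single i 1 := fun i => by simp [sp, hβ1]
  have hsp2 : ∀ v, (∀ i, b i ≠ v) → sp v = 0 := fun v hv => by simp [sp, hβ2 v hv]
  let ct : (ι →₀ ℕ) → (ι →₀ ℕ) := fun e => ∑ v, e v • Finsupp.single (ρ v) 1
  let bs : (ι →₀ ℕ) → (Fin q →₀ ℕ) := fun e => ∑ v, e v • sp v
  have hbs : ∀ e i, bs e i = e (b i) := by
    intro e i
    simp only [bs, Finsupp.finsetSum_apply, Finsupp.smul_apply]
    rw [Finset.sum_eq_single (b i)]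
    · simp [hsp1]
    · intro v _ hv
      by_cases h : ∃ i', b i' = v
      · obtain ⟨i', rfl⟩ := h
        have : i' ≠ i := fun h => hv (by rw [h])
        simp [hsp1, this]
      · push Not at h
        simp [hsp2 v h]
    · simp
  have hct : ∀ e v, ct e v = ∑ v', if ρ v' = v then e v' else 0 := by
    intro e v
    simp only [ct, Finsupp.finsetSum_apply, Finsupp.smul_apply, Finsupp.single_apply]
    refine Finset.sum_congr rfl fun v' _ => ?_
    split_ifs <;> simp
  have hcta : ∀ e i, ct e (a i) = e (a i) + e (b i) := by
    intro e i
    rw [hct, ← Finset.sum_filter]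
    have : (Finset.univ.filter fun v' => ρ v' = a i) = {a i, b i} := by
      ext v'
      simp only [Finset.mem_filter, Finset.mem_univ, true_and, Finset.mem_insert,
        Finset.mem_singleton]
      by_cases h : ∃ i', b i' = v'
      · obtain ⟨i', rfl⟩ := h
        rw [hρ1]
        constructor
        · intro h; right; rw [ha h]
        · rintro (h | h)
          · exact absurd h.symm (hab _ _)
          · rw [hb h]
      · push Not at h
        rw [hρ2 _ h]
        constructor
        · intro h; exact Or.inl h
        · rintro (h' | h')
          · exact h'
          · exact absurd h'.symm (h i)
    rw [this, Finset.sum_pair (hab i i)]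
  have hctv : ∀ e v, (∀ i, a i ≠ v) → (∀ i, b i ≠ v) → ct e v = e v := by
    intro e v hva hvb
    rw [hct, Finset.sum_eq_single v]
    · simp [hρ2 v hvb]
    · intro v' _ hv'
      rw [if_neg]
      by_cases h : ∃ i', b i' = v'
      · obtain ⟨i', rfl⟩ := h
        rw [hρ1]; exact hva i'
      · push Not at h
        rw [hρ2 _ h]; exact hv'
    · simp
  let ψ : MvPolynomial ι K →ₐ[K] MvPolynomial ι (MvPolynomial (Fin q) K) :=
    aeval (fun v => monomial (Finsupp.single (ρ v) 1) (monomial (sp v) (1 : K)))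
  have hψ : ∀ e (r : K), ψ (monomial e r) = monomial (ct e) (monomial (bs e) r) := by
    intro e r
    simp only [ψ, aeval_monomial]
    rw [Finsupp.prod_fintype _ _ (by simp)]
    simp only [monomial_pow, one_pow]
    have : ∀ s : Finset ι, (∏ v ∈ s, (monomial (e v • Finsupp.single (ρ v) 1))
        ((monomial (e v • sp v)) (1:K))) =
        monomial (∑ v ∈ s, e v • Finsupp.single (ρ v) 1) (monomial (∑ v ∈ s, e v • sp v) (1:K)) := by
      intro s
      induction s using Finset.induction_on with
      | empty => simp
      | insert v s hv ih => rw [Finset.prod_insert hv, ih, monomial_mul, monomial_mul,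
          Finset.sum_insert hv, Finset.sum_insert hv, one_mul]
    rw [this]
    simp only [ct, bs]
    rw [MvPolynomial.algebraMap_apply, algebraMap_eq, C_mul_monomial, C_mul_monomial, mul_one]
  -- translation
  have htr : ∀ t : K, (MvPolynomial.mapAlgHom (aeval (fun i => X i + C t) :
      MvPolynomial (Fin q) K →ₐ[K] MvPolynomial (Fin q) K)).comp ψ = ψ.comp (aeval (α t)) := by
    intro t
    apply MvPolynomial.algHom_ext
    intro v
    by_cases h : ∃ i', b i' = v
    · obtain ⟨i, rfl⟩ := h
      have h1 : ∀ i', b i' ≠ a i := fun i' => (hab i i').symm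
      simp only [AlgHom.comp_apply, ψ, aeval_X, hα1, map_add, map_mul, hρ1, hsp1, mapAlgHom_apply,
        map_monomial, aeval_C, hρ2 _ h1, hsp2 _ h1]
      rw [MvPolynomial.algebraMap_apply, algebraMap_eq, C_mul_monomial, ← map_add]
      congr 1
      have hX : (monomial (Finsupp.single i 1) (1:K) : MvPolynomial (Fin q) K) = X i := rfl
      simp [hX]
    · push Not at h
      simp only [AlgHom.comp_apply, ψ, aeval_X, hα2 t v h, hρ2 v h, hsp2 v h, mapAlgHom_apply,
        map_monomial]
      simp
  let p : MvPolynomial (Fin q) K := coeff (ct e) (ψ G)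
  have hpinv : ∀ t : K, aeval (fun i => X i + C t) p = p := by
    intro t
    have h1 := DFunLike.congr_fun (htr t) G
    simp only [AlgHom.comp_apply, hinv] at h1
    have h2 := congrArg (coeff (ct e)) h1
    rw [mapAlgHom_apply, coeff_map] at h2
    exact h2
  have hpc : ∀ κ, coeff κ p = ∑ e' ∈ G.support, if ct e' = ct e ∧ bs e' = κ then coeff e' G else 0 := by
    intro κ
    simp only [p]
    conv_lhs => rw [G.as_sum]
    rw [map_sum, coeff_sum, coeff_sum]
    refine Finset.sum_congr rfl fun e' _ => ?_
    rw [hψ, coeff_monomial]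
    by_cases h : ct e' = ct e
    · simp [h, coeff_monomial]
    · simp [h]
  have hext : ∀ e', ct e' = ct e → bs e' = bs e → e' = e := by
    intro e' h1 h2
    have hB : ∀ i, e' (b i) = e (b i) := fun i => by rw [← hbs, ← hbs, h2]
    ext v
    by_cases h : ∃ i', b i' = v
    · obtain ⟨i, rfl⟩ := h; exact hB i
    · push Not at h
      by_cases h' : ∃ i', a i' = v
      · obtain ⟨i, rfl⟩ := h'
        have := hcta e' i
        rw [h1, hcta, hB i] at this
        omega
      · push Not at h'
        rw [← hctv e' v h' h, h1, hctv e v h' h]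
  have hsupp : ∀ κ ∈ p.support, ∃ e' ∈ G.support, ct e' = ct e ∧ bs e' = κ := by
    intro κ hκ
    rw [mem_support_iff, hpc] at hκ
    obtain ⟨e', h1, h2⟩ := Finset.exists_ne_zero_of_sum_ne_zero hκ
    refine ⟨e', h1, ?_⟩
    by_contra hne
    exact h2 (if_neg hne)
  have hep : bs e ∈ p.support := by
    rw [mem_support_iff, hpc, Finset.sum_eq_single e]
    · simpa using mem_support_iff.1 he
    · intro e' _ hne
      rw [if_neg]
      rintro ⟨h1, h2⟩; exact hne (hext e' h1 h2)
    · intro h; exact absurd he h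
  have hsum : ∀ e', ct e' = ct e → ∀ i, e' (a i) + e' (b i) = e (a i) + e (b i) := by
    intro e' h i
    rw [← hcta, ← hcta, h]
  have := two_line_inv q p (fun i => e (a i) + e (b i)) (bs e) hpinv
    (by intro κ hκ i
        obtain ⟨e', h1, h2, rfl⟩ := hsupp κ hκ
        rw [hbs, ← hsum e' h2 i]; omega)
    hep
    (by intro κ hκ j hj
        obtain ⟨e', h1, h2, rfl⟩ := hsupp κ hκ
        rw [hbs, hbs]
        refine hmin e' h1 (fun v hva hvb => ?_) (hsum e' h2) j (fun i hi => ?_)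
        · rw [← hctv e' v hva hvb, h2, hctv e v hva hvb]
        · simpa [hbs] using hj i hi) j
  simp only [hbs] at this
  have h3 : ∑ i, (if i < j then e (a i) + e (b i) else 0) =
      (∑ i, if i < j then e (a i) else 0) + ∑ i, if i < j then e (b i) else 0 := by
    rw [← Finset.sum_add_distrib]
    refine Finset.sum_congr rfl fun i _ => ?_
    split_ifs <;> simp
  omega


/-- column partial sums -/
def tP (A : ℕ → ℕ → ℕ) (s c : ℕ) : ℕ := ∑ s' ∈ Finset.range s, A s' c
/-- row partial sums -/
def tB (A : ℕ → ℕ → ℕ) (s c : ℕ) : ℕ := ∑ c' ∈ Finset.range c, A s c'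

lemma tP_succ (A : ℕ → ℕ → ℕ) (s c : ℕ) : tP A (s+1) c = tP A s c + A s c := by
  simp [tP, Finset.sum_range_succ]
lemma tB_succ (A : ℕ → ℕ → ℕ) (s c : ℕ) : tB A s (c+1) = tB A s c + A s c := by
  simp [tB, Finset.sum_range_succ]
lemma tP_mono (A : ℕ → ℕ → ℕ) (c : ℕ) : Monotone (fun s => tP A s c) :=
  monotone_nat_of_le_succ fun s => by rw [tP_succ]; omega
lemma tB_mono (A : ℕ → ℕ → ℕ) (s : ℕ) : Monotone (tB A s) :=
  monotone_nat_of_le_succ fun c => by rw [tB_succ]; omega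

/-- conditions on the leading table -/
structure GoodTab (A : ℕ → ℕ → ℕ) (n M d : ℕ) (blk : ℕ → ℕ) : Prop where
  hA0 : ∀ s, M ≤ s → ∀ c, A s c = 0
  hR : ∀ s < M, ∀ c, c + 1 < n → tP A (s+1) (c+1) ≤ tP A s c
  hL : ∀ s, s + 1 < M → blk s = blk (s+1) → ∀ c < n, tB A (s+1) (c+1) ≤ tB A s c
  hd : ∀ c < n, tP A M c = d
  hblk : Monotone blk

/-- index of the interval containing `k` -/
noncomputable def tIdx (f : ℕ → ℕ) (k : ℕ) : ℕ := sInf {j | k < f (j+1)}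

lemma tIdx_spec (f : ℕ → ℕ) (hf : Monotone f) (h0 : f 0 = 0) (k N : ℕ) (hk : k < f N) :
    tIdx f k < N ∧ f (tIdx f k) ≤ k ∧ k < f (tIdx f k + 1) := by
  have hN : N ≠ 0 := by rintro rfl; omega
  have hmem : N - 1 ∈ {j | k < f (j+1)} := by
    have : N - 1 + 1 = N := by omega
    simp only [Set.mem_ofPred_eq, this]; exact hk
  have h1 : tIdx f k ∈ {j | k < f (j+1)} := Nat.sInf_mem ⟨_, hmem⟩
  have h2 : tIdx f k ≤ N - 1 := Nat.sInf_le hmem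
  refine ⟨by omega, ?_, h1⟩
  by_contra hlt
  push Not at hlt
  rcases Nat.eq_zero_or_pos (tIdx f k) with h | h
  · rw [h, h0] at hlt; omega
  · have : tIdx f k - 1 ∈ {j | k < f (j+1)} := by
      have h3 : tIdx f k - 1 + 1 = tIdx f k := by omega
      simp only [Set.mem_ofPred_eq, h3]; exact hlt
    have h4 : tIdx f k ≤ tIdx f k - 1 := Nat.sInf_le this
    omega

lemma tIdx_unique (f : ℕ → ℕ) (hf : Monotone f) (k c c' : ℕ) (h1 : f c ≤ k) (h2 : k < f (c+1))
    (h1' : f c' ≤ k) (h2' : k < f (c'+1)) : c = c' := by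
  rcases lt_trichotomy c c' with h | h | h
  · have := hf (show c + 1 ≤ c' by omega); omega
  · exact h
  · have := hf (show c' + 1 ≤ c by omega); omega

/-- column of the standard filling -/
noncomputable def tC (A : ℕ → ℕ → ℕ) (k s : ℕ) : ℕ := tIdx (tB A s) k
/-- level of the standard filling -/
noncomputable def tL (A : ℕ → ℕ → ℕ) (k s : ℕ) : ℕ :=
  tP A (s+1) (tC A k s) - 1 - (k - tB A s (tC A k s))

namespace GoodTab
variable {A : ℕ → ℕ → ℕ} {n M d : ℕ} {blk : ℕ → ℕ}

lemma lt_M (h : GoodTab A n M d blk) {k s : ℕ} (hk : k < tB A s n) : s < M := by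
  by_contra hs
  have : tB A s n = 0 := by
    unfold tB
    exact Finset.sum_eq_zero fun c _ => h.hA0 s (by omega) c
  omega

lemma specC (_h : GoodTab A n M d blk) {k s : ℕ} (hk : k < tB A s n) :
    tC A k s < n ∧ tB A s (tC A k s) ≤ k ∧ k < tB A s (tC A k s + 1) :=
  tIdx_spec (tB A s) (tB_mono A s) (by simp [tB]) k n hk

lemma specC_iff (h : GoodTab A n M d blk) {k s c : ℕ} (hk : k < tB A s n) :
    tC A k s = c ↔ tB A s c ≤ k ∧ k < tB A s (c + 1) := by
  obtain ⟨h1, h2, h3⟩ := h.specC hk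
  constructor
  · rintro rfl; exact ⟨h2, h3⟩
  · rintro ⟨h4, h5⟩
    exact tIdx_unique _ (tB_mono A s) k _ _ h2 h3 h4 h5

lemma specL (h : GoodTab A n M d blk) {k s : ℕ} (hk : k < tB A s n) :
    tP A s (tC A k s) ≤ tL A k s ∧ tL A k s < tP A (s+1) (tC A k s) ∧
    tL A k s + 1 + k = tP A (s+1) (tC A k s) + tB A s (tC A k s) := by
  obtain ⟨h1, h2, h3⟩ := h.specC hk
  have h4 := tP_succ A s (tC A k s)
  have h5 := tB_succ A s (tC A k s)
  unfold tL
  omega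

lemma specL_lt (h : GoodTab A n M d blk) {k s : ℕ} (hk : k < tB A s n) : tL A k s < d := by
  have h1 := (h.specL hk).2.1
  have h2 := tP_mono A (tC A k s) (show s + 1 ≤ M from h.lt_M hk)
  rw [← h.hd _ (h.specC hk).1]
  exact lt_of_lt_of_le h1 h2

lemma surj (h : GoodTab A n M d blk) {l c s : ℕ} (hc : c < n) (hl : l < tP A s c) :
    ∃ s' < s, ∃ k, k < tB A s' n ∧ tL A k s' = l ∧ tC A k s' = c := by
  obtain ⟨h1, h2, h3⟩ := tIdx_spec (fun s => tP A s c) (tP_mono A c) (by simp [tP]) l s hl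
  set s' := tIdx (fun s => tP A s c) l
  have h4 := tP_succ A s' c
  have h5 := tB_succ A s' c
  have h6 := tB_mono A s' (show c + 1 ≤ n from hc)
  refine ⟨s', h1, tB A s' c + (tP A (s'+1) c - 1 - l), by omega, ?_⟩
  have hk : tB A s' c + (tP A (s'+1) c - 1 - l) < tB A s' n := by omega
  have hC : tC A (tB A s' c + (tP A (s'+1) c - 1 - l)) s' = c :=
    (h.specC_iff hk).2 ⟨by omega, by omega⟩
  have hL := (h.specL hk).2.2
  rw [hC] at hL
  exact ⟨by omega, hC⟩

lemma inj (h : GoodTab A n M d blk) {k s k' s' : ℕ} (hk : k < tB A s n) (hk' : k' < tB A s' n)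
    (hL : tL A k s = tL A k' s') (hC : tC A k s = tC A k' s') : s = s' ∧ k = k' := by
  obtain ⟨h1, h2, h3⟩ := h.specL hk
  obtain ⟨h1', h2', h3'⟩ := h.specL hk'
  have hs : s = s' := by
    rw [← hC, ← hL] at h1' h2'
    generalize tC A k s = c at *
    exact tIdx_unique (fun t => tP A t c) (tP_mono A c) _ s s' h1 h2 h1' h2'
  subst hs
  refine ⟨rfl, ?_⟩
  rw [← hC, ← hL] at h3'
  omega

lemma P_anti (h : GoodTab A n M d blk) {s : ℕ} (hs : s < M) {c1 c2 : ℕ} (h12 : c1 ≤ c2)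
    (h2 : c2 < n) : tP A s c2 ≤ tP A s c1 := by
  induction c2, h12 using Nat.le_induction with
  | base => exact le_rfl
  | succ c hc ih =>
    have h3 := h.hR s hs c h2
    have h4 := tP_succ A s (c+1)
    have := ih (by omega)
    omega

lemma P_lt (h : GoodTab A n M d blk) {s : ℕ} (hs : s < M) {c1 c2 : ℕ} (h12 : c1 < c2)
    (h2 : c2 < n) : tP A (s+1) c2 ≤ tP A s c1 := by
  obtain ⟨c, rfl⟩ : ∃ c, c2 = c + 1 := ⟨c2 - 1, by omega⟩
  exact (h.hR s hs c h2).trans (h.P_anti hs (by omega) (by omega))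

lemma phi_anti (h : GoodTab A n M d blk) {s : ℕ} (hs : s < M) {c1 c2 : ℕ} (h12 : c1 ≤ c2)
    (h2 : c2 < n) : tP A (s+1) c2 + tB A s c2 ≤ tP A (s+1) c1 + tB A s c1 := by
  induction c2, h12 using Nat.le_induction with
  | base => exact le_rfl
  | succ c hc ih =>
    have h3 := h.hR s hs c h2
    have h4 := tP_succ A s c
    have h5 := tB_succ A s c
    have := ih (by omega)
    omega

lemma lam_step (h : GoodTab A n M d blk) {s : ℕ} (hs : s + 1 < M) (hb : blk s = blk (s+1)) :
    tB A (s+1) n ≤ tB A s n := by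
  rcases Nat.eq_zero_or_pos n with h0 | h0
  · subst h0; simp [tB]
  · have h1 := h.hL s hs hb (n-1) (by omega)
    have h2 : n - 1 + 1 = n := by omega
    rw [h2] at h1
    exact h1.trans (tB_mono A s (by omega))

lemma lam_anti (h : GoodTab A n M d blk) {s s' : ℕ} (hss : s ≤ s') (hs' : s' < M)
    (hb : blk s = blk s') : tB A s' n ≤ tB A s n := by
  induction s', hss using Nat.le_induction with
  | base => exact le_rfl
  | succ t ht ih =>
    have h1 := h.hblk ht
    have h2 := h.hblk (Nat.le_succ t)
    simp only [Nat.succ_eq_add_one] at h2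
    exact (h.lam_step hs' (by omega)).trans (ih (by omega) (by omega))

lemma L_step (h : GoodTab A n M d blk) {k s : ℕ} (hb : blk s = blk (s+1))
    (hk : k < tB A (s+1) n) : tL A k (s+1) ≤ tL A k s := by
  have hs := h.lt_M hk
  have hk0 : k < tB A s n := lt_of_lt_of_le hk (h.lam_step hs hb)
  obtain ⟨h1, h2, h3⟩ := h.specC hk
  obtain ⟨g1, g2, g3⟩ := h.specC hk0
  have e1 := (h.specL hk).2.2
  have e2 := (h.specL hk0).2.2
  set c' := tC A k (s+1)
  set c := tC A k s
  have h4 := h.hL s hs hb c' h1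
  have hcc : c < c' := by
    by_contra hge
    have := tB_mono A s (show c' ≤ c by omega)
    omega
  obtain ⟨c'', hc''⟩ : ∃ c'', c' = c'' + 1 := ⟨c' - 1, by omega⟩
  rw [hc''] at e1 h1
  have h5 := h.hR (s+1) hs c'' h1
  have h6 := h.hL s hs hb c'' (by omega)
  have h7 := h.phi_anti (s := s) (by omega) (c1 := c) (c2 := c'') (by omega) (by omega)
  omega

lemma L_anti (h : GoodTab A n M d blk) {k s s' : ℕ} (hss : s ≤ s') (hb : blk s = blk s')
    (hk : k < tB A s' n) : tL A k s' ≤ tL A k s := by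
  induction s', hss using Nat.le_induction with
  | base => exact le_rfl
  | succ t ht ih =>
    have h1 := h.hblk ht
    have h2 := h.hblk (Nat.le_succ t)
    simp only [Nat.succ_eq_add_one] at h2
    have hs := h.lt_M hk
    have hbt : blk t = blk (t+1) := by omega
    exact (h.L_step hbt hk).trans (ih (by omega) (lt_of_lt_of_le hk (h.lam_step hs hbt)))

lemma countC (h : GoodTab A n M d blk) (s c : ℕ) (hc : c < n) :
    ((Finset.range (tB A s n)).filter fun k => tC A k s = c).card = A s c := by
  have : ((Finset.range (tB A s n)).filter fun k => tC A k s = c) =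
      Finset.Ico (tB A s c) (tB A s (c+1)) := by
    ext k
    simp only [Finset.mem_filter, Finset.mem_range, Finset.mem_Ico]
    constructor
    · rintro ⟨h1, h2⟩; exact (h.specC_iff h1).1 h2
    · intro h1
      have h2 : k < tB A s n := lt_of_lt_of_le h1.2 (tB_mono A s hc)
      exact ⟨h2, (h.specC_iff h2).2 h1⟩
  rw [this, Nat.card_Ico, tB_succ]; omega

theorem uniq (h : GoodTab A n M d blk) (L C : ℕ → ℕ → ℕ)
    (hinj : ∀ k s k' s', k < tB A s n → k' < tB A s' n → L k s = L k' s' → C k s = C k' s' →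
      s = s' ∧ k = k')
    (hCn : ∀ k s, k < tB A s n → C k s < n)
    (hb : ∀ i k l, ((Finset.range M).filter fun s => blk s = i ∧ k < tB A s n ∧ L k s = l).card =
      ((Finset.range M).filter fun s => blk s = i ∧ k < tB A s n ∧ tL A k s = l).card)
    (hlex : ∀ s < M, (∀ s' < s, ∀ c < n,
        ((Finset.range (tB A s' n)).filter fun k => C k s' = c).card = A s' c) →
      ∀ c < n, (∀ c' < c, ((Finset.range (tB A s n)).filter fun k => C k s = c').card = A s c') →
      A s c ≤ ((Finset.range (tB A s n)).filter fun k => C k s = c).card) :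
    ∀ s k, k < tB A s n → L k s = tL A k s ∧ C k s = tC A k s := by
  intro s
  induction s using Nat.strong_induction_on with
  | _ s ih =>
    by_cases hsM : s < M
    swap
    · intro k hk; exact absurd (h.lt_M hk) hsM
    have hLle : ∀ k, k < tB A s n → L k s ≤ tL A k s := by
      intro k hk
      by_contra hgt
      push Not at hgt
      have hcard := hb (blk s) k (L k s)
      have hlt : ((Finset.range M).filter fun s' => blk s' = blk s ∧ k < tB A s' n ∧ tL A k s' = L k s) ⊂
          ((Finset.range M).filter fun s' => blk s' = blk s ∧ k < tB A s' n ∧ L k s' = L k s) := by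
        rw [Finset.ssubset_iff_of_subset]
        · refine ⟨s, by simp [hsM, hk], ?_⟩
          simp only [Finset.mem_filter, not_and]
          intro _ _ _
          omega
        · intro s' hs'
          simp only [Finset.mem_filter] at hs' ⊢
          obtain ⟨h1, h2, h3, h4⟩ := hs'
          refine ⟨h1, h2, h3, ?_⟩
          have hss : s' < s := by
            by_contra hge
            have := h.L_anti (show s ≤ s' by omega) h2.symm h3
            omega
          rw [(ih s' hss k h3).1, h4]
      have := Finset.card_lt_card hlt
      omega
    have hfree : ∀ k, k < tB A s n → tP A s (C k s) ≤ L k s := by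
      intro k hk
      by_contra hgt
      push Not at hgt
      obtain ⟨s', hs', k', hk', e1, e2⟩ := h.surj (hCn k s hk) hgt
      have e3 := ih s' hs' k' hk'
      have := hinj k s k' s' hk hk' (by rw [e3.1, e1]) (by rw [e3.2, e2])
      omega
    have hCge : ∀ k, k < tB A s n → tC A k s ≤ C k s := by
      intro k hk
      by_contra hlt
      push Not at hlt
      have h1 := h.P_lt hsM hlt (h.specC hk).1
      have h2 := (h.specL hk).2.1
      have h3 := hfree k hk
      have h4 := hLle k hk
      omega
    have hfib : ∀ c < n, ((Finset.range (tB A s n)).filter fun k => C k s = c) =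
        ((Finset.range (tB A s n)).filter fun k => tC A k s = c) := by
      intro c
      induction c using Nat.strong_induction_on with
      | _ c ihc =>
        intro hc
        refine Finset.eq_of_subset_of_card_le ?_ ?_
        · intro k hk
          simp only [Finset.mem_filter] at hk ⊢
          refine ⟨hk.1, ?_⟩
          have h1 := hCge k (Finset.mem_range.1 hk.1)
          by_contra hne
          have h2 : tC A k s < c := by omega
          have h3 : k ∈ ((Finset.range (tB A s n)).filter fun k' => tC A k' s = tC A k s) := by
            simp only [Finset.mem_filter]; exact ⟨hk.1, trivial⟩
          rw [← ihc _ h2 (by omega)] at h3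
          simp only [Finset.mem_filter] at h3
          omega
        · rw [h.countC s c hc]
          refine hlex s hsM ?_ c hc ?_
          · intro s' hs' c' hc'
            rw [← h.countC s' c' hc']
            congr 1
            refine Finset.filter_congr fun k hk => ?_
            rw [(ih s' hs' k (Finset.mem_range.1 hk)).2]
          · intro c' hc'
            rw [ihc c' hc' (by omega), h.countC s c' (by omega)]
    have hCeq : ∀ k, k < tB A s n → C k s = tC A k s := by
      intro k hk
      have h1 : k ∈ ((Finset.range (tB A s n)).filter fun k' => tC A k' s = tC A k s) := by
        simp only [Finset.mem_filter, Finset.mem_range]; exact ⟨hk, trivial⟩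
      rw [← hfib _ (h.specC hk).1] at h1
      exact (Finset.mem_filter.1 h1).2
    have hLeq : ∀ j k, k < tB A s n → tB A s n - k = j → L k s = tL A k s := by
      intro j
      induction j using Nat.strong_induction_on with
      | _ j ihj =>
        intro k hk hj
        by_contra hne
        have h1 := hLle k hk
        have h2 := hfree k hk
        rw [hCeq k hk] at h2
        obtain ⟨a1, a2, a3⟩ := h.specL hk
        obtain ⟨b1, b2, b3⟩ := h.specC hk
        have h4 := tP_succ A s (tC A k s)
        have h5 := tB_succ A s (tC A k s)
        have h6 := tB_mono A s (show tC A k s + 1 ≤ n from b1)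
        obtain ⟨k', hk'⟩ : ∃ k', k' = k + (tL A k s - L k s) := ⟨_, rfl⟩
        have hk'1 : k' < tB A s (tC A k s + 1) := by omega
        have hk'n : k' < tB A s n := by omega
        have hC' : tC A k' s = tC A k s := (h.specC_iff hk'n).2 ⟨by omega, hk'1⟩
        have h7 := ihj (tB A s n - k') (by omega) k' hk'n rfl
        have h8 := (h.specL hk'n).2.2
        rw [hC'] at h8
        have := hinj k s k' s hk hk'n (by omega) (by rw [hCeq k hk, hCeq k' hk'n, hC'])
        omega
    intro k hk
    exact ⟨hLeq _ k hk rfl, hCeq k hk⟩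

end GoodTab


open Polynomial in
lemma det_congr_coeff {R N : Type*} [CommRing R] [Fintype N] [DecidableEq N] (D : ℕ)
    (M1 M2 E : Matrix N N R[X]) (h : M1 = M2 + (X ^ (D+1) : R[X]) • E) (k : ℕ) (hk : k ≤ D) :
    M1.det.coeff k = M2.det.coeff k := by
  let I : Ideal R[X] := Ideal.span {X ^ (D+1)}
  have h1 : (Ideal.Quotient.mk I) M1.det = (Ideal.Quotient.mk I) M2.det := by
    rw [RingHom.map_det, RingHom.map_det]
    congr 1
    ext i j
    rw [h]
    simp only [RingHom.mapMatrix_apply, Matrix.map_apply, Matrix.add_apply, Matrix.smul_apply,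
      smul_eq_mul]
    rw [Ideal.Quotient.eq]
    simp only [add_sub_cancel_left]
    exact Ideal.mul_mem_right _ _ (Ideal.subset_span rfl)
  rw [Ideal.Quotient.eq, Ideal.mem_span_singleton, X_pow_dvd_iff] at h1
  have := h1 k (by omega)
  rw [coeff_sub, sub_eq_zero] at this
  exact this

open Polynomial in
/-- sum of letters -/
noncomputable def sumL {R N : Type*} [CommRing R] [Fintype N] [DecidableEq N]
    (L : List (ℕ × Matrix N N R)) : Matrix N N R[X] :=
  (L.map fun x => (X ^ x.1 : R[X]) • x.2.map C).sum

open Polynomial in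
lemma sumL_perm {R N : Type*} [CommRing R] [Fintype N] [DecidableEq N]
    {L L' : List (ℕ × Matrix N N R)} (h : L.Perm L') : sumL L = sumL L' :=
  (h.map _).sum_eq

open Polynomial in
lemma letter_mul {R N : Type*} [CommRing R] [Fintype N] [DecidableEq N] (g : ℕ) (a : Matrix N N R)
    (x : ℕ × Matrix N N R) (k : ℕ) :
    ((X ^ g : R[X]) • a.map C) ^ k * ((X ^ x.1 : R[X]) • x.2.map C) =
      (X ^ (k * g + x.1) : R[X]) • (a ^ k * x.2).map C := by
  have : (a ^ k * x.2).map (C : R → R[X]) = (a.map C) ^ k * x.2.map C := by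
    have h := map_mul (C.mapMatrix : Matrix N N R →+* Matrix N N R[X]) (a^k) x.2
    rw [map_pow] at h
    exact h
  rw [this, _root_.smul_pow, smul_mul_smul_comm, ← pow_mul, ← pow_add, mul_comm g k]

open Polynomial in
lemma lowcoef_main {R N : Type*} [CommRing R] [Fintype N] [DecidableEq N] (S : Subring R)
    (MM : Set (Matrix N N R)) (hmul : ∀ a ∈ MM, ∀ b ∈ MM, a * b ∈ MM)
    (hS : ∀ a ∈ MM, ∀ k, a.charpolyRev.coeff k ∈ S) (D : ℕ) :
    ∀ (j g : ℕ), 1 ≤ g → D + 1 ≤ g + j → ∀ (r : ℕ) (L : List (ℕ × Matrix N N R)),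
      L.countP (fun x => x.1 = g) = r →
      (∀ x ∈ L, x.2 ∈ MM ∧ g ≤ x.1) → ∀ k ≤ D, (1 - sumL L).det.coeff k ∈ S := by
  have hpow : ∀ a ∈ MM, ∀ b ∈ MM, ∀ k : ℕ, a ^ k * b ∈ MM := by
    intro a ha b hb k
    induction k with
    | zero => simpa using hb
    | succ k ih => rw [pow_succ', mul_assoc]; exact hmul a ha _ ih
  have hlet : ∀ a ∈ MM, ∀ g k, (1 - (X ^ g : R[X]) • a.map C).det.coeff k ∈ S := by
    intro a ha g k
    have h1 : (1 - (X ^ g : R[X]) • a.map C).det = a.charpolyRev.comp (X ^ g) := by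
      rw [Matrix.charpolyRev]
      change _ = Polynomial.compRingHom (X ^ g) _
      rw [RingHom.map_det]
      congr 1
      ext i j
      by_cases hij : i = j
      · subst hij; simp
      · simp [Matrix.one_apply_ne hij]
    rw [h1, comp_eq_sum_left, sum_def, finsetSum_coeff]
    refine Subring.sum_mem _ fun i _ => ?_
    rw [← pow_mul, coeff_C_mul_X_pow]
    split_ifs
    · exact hS a ha i
    · exact S.zero_mem
  have hprod : ∀ p q : R[X], (∀ k ≤ D, p.coeff k ∈ S) → (∀ k ≤ D, q.coeff k ∈ S) →
      ∀ k ≤ D, (p * q).coeff k ∈ S := by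
    intro p q hp hq k hk
    rw [coeff_mul]
    refine Subring.sum_mem _ fun x hx => ?_
    have := Finset.HasAntidiagonal.mem_antidiagonal.1 hx
    exact S.mul_mem (hp _ (by omega)) (hq _ (by omega))
  intro j
  induction j with
  | zero =>
    intro g hg hD r L _ hL k hk
    have : ∃ E, sumL L = (X ^ (D+1) : R[X]) • E := by
      clear * - hL hD
      induction L with
      | nil => exact ⟨0, by simp [sumL]⟩
      | cons x L ih =>
        obtain ⟨E, hE⟩ := ih (fun y hy => hL y (List.mem_cons_of_mem _ hy))
        have hx := (hL x List.mem_cons_self).2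
        refine ⟨(X ^ (x.1 - (D+1)) : R[X]) • x.2.map C + E, ?_⟩
        have : sumL (x :: L) = (X ^ x.1 : R[X]) • x.2.map C + sumL L := by simp [sumL]
        rw [this, hE, smul_add, smul_smul, ← pow_add]
        congr 3
        omega
    obtain ⟨E, hE⟩ := this
    rw [det_congr_coeff D (1 - sumL L) 1 (-E) (by rw [hE, smul_neg, sub_eq_add_neg]) k hk,
      Matrix.det_one, coeff_one]
    split_ifs
    · exact S.one_mem
    · exact S.zero_mem
  | succ j ihj =>
    intro g hg hD r
    induction r with
    | zero =>
      intro L hL0 hL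
      rw [List.countP_eq_zero] at hL0
      refine ihj (g+1) (by omega) (by omega) _ L rfl fun x hx => ⟨(hL x hx).1, ?_⟩
      have h1 := hL0 x hx
      have h2 := (hL x hx).2
      simp at h1
      omega
    | succ r ihr =>
      intro L hLr hL k hk
      have hpos : 0 < L.countP (fun x => x.1 = g) := by omega
      obtain ⟨a, haL, hag⟩ := List.countP_pos_iff.1 hpos
      simp only [decide_eq_true_eq] at hag
      classical
      have hperm := List.perm_cons_erase haL
      set L' := L.erase a with hL'
      have hL'mem : ∀ x ∈ L', x.2 ∈ MM ∧ g ≤ x.1 := fun x hx => hL x (List.mem_of_mem_erase hx)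
      have haMM : a.2 ∈ MM := (hL a haL).1
      have hcount : L'.countP (fun x => x.1 = g) = r := by
        rw [hperm.countP_eq, List.countP_cons_of_pos (by simpa using hag)] at hLr
        omega
      let rest : List (ℕ × Matrix N N R) := (List.range D).flatMap fun i =>
        L'.map fun x => ((i+1) * g + x.1, a.2 ^ (i+1) * x.2)
      have hrest : ∀ x ∈ rest, x.2 ∈ MM ∧ g < x.1 := by
        intro x hx
        simp only [rest, List.mem_flatMap, List.mem_map] at hx
        obtain ⟨i, _, y, hy, rfl⟩ := hx
        refine ⟨hpow _ haMM _ (hL'mem y hy).1 _, ?_⟩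
        have := (hL'mem y hy).2
        simp only
        nlinarith
      have hih := ihr (L' ++ rest) (by
        rw [List.countP_append, hcount, List.countP_eq_zero.2, add_zero]
        intro x hx
        have := (hrest x hx).2
        simp; omega) (by
        intro x hx
        rcases List.mem_append.1 hx with hx | hx
        · exact hL'mem x hx
        · exact ⟨(hrest x hx).1, (hrest x hx).2.le⟩)
      set A : Matrix N N R[X] := (X ^ g : R[X]) • a.2.map C with hA
      set B : Matrix N N R[X] := sumL L' with hB
      have hAk : ∀ i, A ^ i * B = (L'.map fun x => (X ^ (i * g + x.1) : R[X]) • (a.2 ^ i * x.2).map C).sum := by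
        intro i
        rw [hB, sumL, ← List.sum_map_mul_left]
        congr 1
        refine List.map_congr_left fun x _ => ?_
        exact letter_mul g a.2 x i
      have hsum : sumL (L' ++ rest) = (∑ i ∈ Finset.range (D+1), A ^ i) * B := by
        rw [Finset.sum_range_succ', pow_zero, add_mul, one_mul, add_comm]
        have h1 : sumL (L' ++ rest) = B + sumL rest := by simp [sumL, hB]
        rw [h1, Finset.sum_mul]
        congr 1
        have h2 : ∀ n, sumL ((List.range n).flatMap fun i =>
            L'.map fun x => ((i+1) * g + x.1, a.2 ^ (i+1) * x.2)) =
            ∑ i ∈ Finset.range n, A ^ (i+1) * B := by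
          intro n
          induction n with
          | zero => simp [sumL]
          | succ n ih =>
            rw [List.range_succ, List.flatMap_append, Finset.sum_range_succ, ← ih, hAk]
            simp [sumL, Function.comp_def]
        exact h2 D
      have hfac : (1 - A) * (1 - sumL (L' ++ rest)) = 1 - sumL L + A ^ (D+1) * B := by
        have hLs : sumL L = A + B := by
          rw [sumL_perm hperm]
          simp [sumL, hB, hA, hag]
        rw [hsum, hLs, mul_sub, mul_one, ← mul_assoc, mul_neg_geom_sum]
        noncomm_ring
      have hAD : A ^ (D+1) * B = (X ^ (D+1) : R[X]) • ((X ^ ((g - 1) * (D+1)) : R[X]) • ((a.2.map C) ^ (D+1) * B)) := by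
        rw [hA, _root_.smul_pow, smul_smul, smul_mul_assoc, ← pow_mul, ← pow_add]
        congr 2
        obtain ⟨g', rfl⟩ : ∃ g', g = g' + 1 := ⟨g - 1, by omega⟩
        simp; ring
      rw [hAD] at hfac
      rw [← det_congr_coeff D _ _ _ hfac k hk, Matrix.det_mul]
      exact hprod _ _ (fun i _ => hlet a.2 haMM g i) hih k hk

open Polynomial in
lemma det_sum_mem {R N : Type*} [CommRing R] [Nontrivial R] [Fintype N] [DecidableEq N] (S : Subring R)
    (MM : Set (Matrix N N R)) (hmul : ∀ a ∈ MM, ∀ b ∈ MM, a * b ∈ MM)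
    (hS : ∀ a ∈ MM, ∀ k, a.charpolyRev.coeff k ∈ S) {J : Type*} (s : Finset J)
    (f : J → Matrix N N R) (hf : ∀ j ∈ s, f j ∈ MM) : (∑ j ∈ s, f j).det ∈ S := by
  have h1 : ∀ k, (∑ j ∈ s, f j).charpolyRev.coeff k ∈ S := by
    intro k
    have := lowcoef_main S MM hmul hS k k 1 le_rfl (by omega) _
      (s.toList.map fun j => (1, f j)) rfl (by
        intro x hx
        simp only [List.mem_map, Finset.mem_toList] at hx
        obtain ⟨j, hj, rfl⟩ := hx
        exact ⟨hf j hj, le_rfl⟩) k le_rfl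
    have h2 : sumL (s.toList.map fun j => (1, f j)) = (X : R[X]) • (∑ j ∈ s, f j).map C := by
      have h3 : (∑ j ∈ s, f j).map (C : R → R[X]) = ∑ j ∈ s, (f j).map C :=
        map_sum (C.mapMatrix : Matrix N N R →+* Matrix N N R[X]) f s
      rw [h3, Finset.smul_sum, ← Finset.sum_map_toList]
      simp [sumL, Function.comp_def]
    rw [h2] at this
    exact this
  rw [Matrix.det_eq_sign_charpoly_coeff]
  refine S.mul_mem (S.pow_mem (S.neg_mem S.one_mem) _) ?_
  have h4 := h1 (Fintype.card N)
  rw [← Matrix.reverse_charpoly, coeff_reverse, Matrix.charpoly_natDegree_eq_dim] at h4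
  simpa using h4


/-- auxiliary variables -/
abbrev SV (m D d : ℕ) : Type := Bool × (Fin (m+1) × Fin D) × Fin d

open MvPolynomial in
/-- the big matrix -/
noncomputable def bigMat {A : Type*} [CommRing A] {m n : ℕ} (D d : ℕ)
    (Xs : Fin (m+1) → Matrix (Fin n) (Fin n) A) :
    Matrix (Fin d × Fin n) (Fin d × Fin n) (MvPolynomial (SV m D d) A) :=
  Matrix.of fun x y => ∑ p : Fin (m+1) × Fin D,
    X (false, p, x.1) * X (true, p, y.1) * C (Xs p.1 x.2 y.2)

/-- coefficients of the big determinant -/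
noncomputable def bigF {A : Type*} [CommRing A] {m n : ℕ} (D d : ℕ) (β : SV m D d →₀ ℕ)
    (Xs : Fin (m+1) → Matrix (Fin n) (Fin n) A) : A :=
  MvPolynomial.coeff β (bigMat D d Xs).det

lemma bigF_map {A B : Type*} [CommRing A] [CommRing B] (φ : A →+* B) {m n : ℕ} (D d : ℕ)
    (β : SV m D d →₀ ℕ) (Xs : Fin (m+1) → Matrix (Fin n) (Fin n) A) :
    φ (bigF D d β Xs) = bigF D d β (fun i => (Xs i).map φ) := by
  rw [bigF, ← MvPolynomial.coeff_map, RingHom.map_det, bigF]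
  congr 2
  ext1 x y
  simp [bigMat]

lemma charpolyRev_mul_comm' {R N N' : Type*} [CommRing R] [Fintype N] [DecidableEq N]
    [Fintype N'] [DecidableEq N'] (U : Matrix N N' R) (V : Matrix N' N R) :
    (U * V).charpolyRev = (V * U).charpolyRev := by
  rw [Matrix.charpolyRev, Matrix.charpolyRev]
  have h1 : (U * V).map (Polynomial.C : R → Polynomial R) = U.map Polynomial.C * V.map Polynomial.C :=
    Matrix.map_mul
  have h2 : (V * U).map (Polynomial.C : R → Polynomial R) = V.map Polynomial.C * U.map Polynomial.C :=
    Matrix.map_mul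
  rw [h1, h2, ← Matrix.smul_mul, Matrix.det_one_sub_mul_comm, Matrix.mul_smul]

lemma charpolyRev_smul_coeff {R N : Type*} [CommRing R] [Fintype N] [DecidableEq N]
    (r : R) (W : Matrix N N R) (k : ℕ) :
    (r • W).charpolyRev.coeff k = r ^ k * W.charpolyRev.coeff k := by
  have h1 : (r • W).charpolyRev = W.charpolyRev.comp (Polynomial.C r * Polynomial.X) := by
    rw [Matrix.charpolyRev, Matrix.charpolyRev]
    change _ = Polynomial.compRingHom (Polynomial.C r * Polynomial.X) _
    rw [RingHom.map_det]
    congr 1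
    ext1 i j
    by_cases hij : i = j
    · subst hij; simp; ring
    · simp [Matrix.one_apply_ne hij]; ring
  rw [h1, Polynomial.comp_C_mul_X_coeff, mul_comm]

lemma charpolyRev_map {R R' N : Type*} [CommRing R] [CommRing R'] [Fintype N] [DecidableEq N]
    (f : R →+* R') (W : Matrix N N R) :
    (W.map f).charpolyRev = W.charpolyRev.map f := by
  rw [Matrix.charpolyRev, Matrix.charpolyRev]
  change _ = Polynomial.mapRingHom f _
  rw [RingHom.map_det]
  congr 1
  ext1 i j
  by_cases hij : i = j
  · subst hij; simp
  · simp [Matrix.one_apply_ne hij]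

/-- polynomials with coefficients in a subring -/
def coefSubring {A : Type*} [CommRing A] (σ : Type*) (S : Subring A) : Subring (MvPolynomial σ A) where
  carrier := {p | ∀ β, MvPolynomial.coeff β p ∈ S}
  mul_mem' := by
    classical
    intro p q hp hq β
    rw [MvPolynomial.coeff_mul]
    exact S.sum_mem fun x _ => S.mul_mem (hp _) (hq _)
  one_mem' := by
    classical
    intro β
    rw [MvPolynomial.coeff_one]
    split_ifs
    · exact S.one_mem
    · exact S.zero_mem
  add_mem' := by
    intro p q hp hq β
    rw [MvPolynomial.coeff_add]
    exact S.add_mem (hp _) (hq _)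
  zero_mem' := by
    intro β
    rw [MvPolynomial.coeff_zero]; exact S.zero_mem
  neg_mem' := by
    intro p hp β
    rw [MvPolynomial.coeff_neg]; exact S.neg_mem (hp _)

open MvPolynomial Matrix in
lemma bigF_mem {A : Type*} [CommRing A] [Nontrivial A] {m n : ℕ} (D d : ℕ) (β : SV m D d →₀ ℕ)
    (Xs : Fin (m+1) → Matrix (Fin n) (Fin n) A) (S : Subring A)
    (hS : ∀ (w : List (Fin (m+1))) (k : ℕ), (w.map Xs).prod.charpolyRev.coeff k ∈ S) :
    bigF D d β Xs ∈ S := by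
  classical
  let S' := coefSubring (SV m D d) S
  have hX : ∀ v : SV m D d, (X v : MvPolynomial (SV m D d) A) ∈ S' := by
    intro v β
    rw [coeff_X]
    split_ifs
    · exact S.one_mem
    · exact S.zero_mem
  have hC : ∀ a ∈ S, (C a : MvPolynomial (SV m D d) A) ∈ S' := by
    intro a ha β
    rw [coeff_C]
    split_ifs
    · exact ha
    · exact S.zero_mem
  let MM : Set (Matrix (Fin d × Fin n) (Fin d × Fin n) (MvPolynomial (SV m D d) A)) :=
    {M | ∃ r ∈ S', ∃ (l l' : Fin d) (w : List (Fin (m+1))),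
      M = r • kroneckerMap (· * ·) (Matrix.single l l' (1 : MvPolynomial (SV m D d) A))
        ((w.map Xs).prod.map C)}
  have hmem : (bigMat D d Xs).det ∈ S' := by
    have hbig : bigMat D d Xs = ∑ j : (Fin (m+1) × Fin D) × Fin d × Fin d,
        ((X (false, j.1, j.2.1) * X (true, j.1, j.2.2) : MvPolynomial (SV m D d) A)) •
        kroneckerMap (· * ·) (Matrix.single j.2.1 j.2.2 (1 : MvPolynomial (SV m D d) A))
        ((([j.1.1] : List (Fin (m+1))).map Xs).prod.map C) := by
      ext1 x y
      simp only [bigMat, Matrix.of_apply, Matrix.sum_apply, Matrix.smul_apply, kroneckerMap_apply,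
        List.map_cons, List.map_nil, List.prod_singleton, Matrix.map_apply, smul_eq_mul]
      conv_rhs => rw [Fintype.sum_prod_type]
      refine Finset.sum_congr rfl fun p _ => ?_
      rw [Finset.sum_eq_single ((x.1, y.1) : Fin d × Fin d)]
      · simp
      · rintro ⟨l, l'⟩ _ hne
        have : ¬ (l = x.1 ∧ l' = y.1) := by
          rintro ⟨rfl, rfl⟩; exact hne rfl
        simp [Matrix.single_apply, this]
      · simp
    rw [hbig]
    refine det_sum_mem S' MM ?_ ?_ _ _ ?_
    · rintro _ ⟨r, hr, l1, l2, w, rfl⟩ _ ⟨r', hr', l3, l4, w', rfl⟩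
      rw [smul_mul_smul_comm, ← mul_kronecker_mul]
      have hw : (w.map Xs).prod.map (C : A → MvPolynomial (SV m D d) A) * (w'.map Xs).prod.map C
          = ((w ++ w').map Xs).prod.map C := by
        rw [List.map_append, List.prod_append, Matrix.map_mul]
      rw [hw]
      by_cases h : l2 = l3
      · subst h
        rw [Matrix.single_mul_single_same, one_mul]
        exact ⟨_, S'.mul_mem hr hr', _, _, _, rfl⟩
      · rw [Matrix.single_mul_single_of_ne _ _ _ _ h]
        refine ⟨0, S'.zero_mem, l1, l4, [], ?_⟩
        simp
    · rintro _ ⟨r, hr, l, l', w, rfl⟩ k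
      set W : Matrix (Fin n) (Fin n) (MvPolynomial (SV m D d) A) := (w.map Xs).prod.map C with hW
      rw [charpolyRev_smul_coeff]
      refine S'.mul_mem (S'.pow_mem hr _) ?_
      let U : Matrix (Fin d × Fin n) (Fin n) (MvPolynomial (SV m D d) A) :=
        Matrix.of fun x j => if x.1 = l then W x.2 j else 0
      let V : Matrix (Fin n) (Fin d × Fin n) (MvPolynomial (SV m D d) A) :=
        Matrix.of fun j y => if y.1 = l' then (if j = y.2 then 1 else 0) else 0
      have hUV : kroneckerMap (· * ·) (Matrix.single l l' (1 : MvPolynomial (SV m D d) A)) W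
          = U * V := by
        ext1 x y
        simp only [kroneckerMap_apply, Matrix.mul_apply, U, V, Matrix.of_apply, Matrix.single_apply]
        by_cases h1 : l = x.1 <;> by_cases h2 : l' = y.1
        · simp [← h1, ← h2]
        · simp [h2, Ne.symm h2]
        · simp [h1, Ne.symm h1]
        · simp [h1, Ne.symm h1]
      have hVU : V * U = if l = l' then W else 0 := by
        ext1 i j
        simp only [Matrix.mul_apply, U, V, Matrix.of_apply]
        rw [Fintype.sum_prod_type, Fintype.sum_eq_single l]
        · by_cases h : l = l'
          · simp [h]
          · simp [h]
        · intro l1 hl1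
          simp [hl1]
      rw [hUV, charpolyRev_mul_comm', hVU]
      split_ifs
      · rw [hW, charpolyRev_map, Polynomial.coeff_map]
        exact hC _ (hS w k)
      · have : (0 : Matrix (Fin n) (Fin n) (MvPolynomial (SV m D d) A)).charpolyRev = 1 := by
          simp [Matrix.charpolyRev]
        rw [this, Polynomial.coeff_one]
        split_ifs
        · exact S'.one_mem
        · exact S'.zero_mem
    · intro j _
      exact ⟨_, S'.mul_mem (hX _) (hX _), _, _, _, rfl⟩
  exact hmem β


/-- lowest-weight part of a substitution -/
lemma min_aux {K ι : Type*} [Field K] [Fintype ι] (w : ι → ℕ) (k : ℕ)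
    (F : MvPolynomial ι K) (hk : ∀ e ∈ F.support, k ≤ ∑ i, e i * w i) (p : ι → Polynomial K) :
    ∃ q : Polynomial K, MvPolynomial.aeval (fun i => Polynomial.X ^ (w i) * p i) F
        = Polynomial.X ^ k * q ∧
      q.eval 0 = ∑ e ∈ F.support, if ∑ i, e i * w i = k then
        MvPolynomial.coeff e F * ∏ i, ((p i).eval 0) ^ e i else 0 := by
  refine ⟨∑ e ∈ F.support, Polynomial.C (MvPolynomial.coeff e F) *
    (Polynomial.X ^ (∑ i, e i * w i - k) * ∏ i, (p i) ^ e i), ?_, ?_⟩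
  · rw [MvPolynomial.aeval_def, MvPolynomial.eval₂_eq', Finset.mul_sum]
    refine Finset.sum_congr rfl fun e he => ?_
    have h1 : ∏ i, (Polynomial.X ^ (w i) * p i) ^ e i =
        (Polynomial.X : Polynomial K) ^ (∑ i, e i * w i) * ∏ i, (p i) ^ e i := by
      simp only [mul_pow, Finset.prod_mul_distrib, ← pow_mul, Finset.prod_pow_eq_pow_sum]
      congr 2
      exact Finset.sum_congr rfl fun i _ => mul_comm _ _
    rw [h1]
    have h2 : (Polynomial.X : Polynomial K) ^ (∑ i, e i * w i) =
        Polynomial.X ^ k * Polynomial.X ^ (∑ i, e i * w i - k) := by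
      rw [← pow_add, Nat.add_sub_cancel' (hk e he)]
    rw [h2]
    change Polynomial.C _ * _ = _
    ring
  · rw [Polynomial.eval_finsetSum]
    refine Finset.sum_congr rfl fun e he => ?_
    have := hk e he
    split_ifs with h
    · simp [h, Polynomial.eval_prod]
    · have : ∑ i, e i * w i - k ≠ 0 := by omega
      simp [this]

/-- component of lowest weight -/
noncomputable def minComp {K ι : Type*} [Field K] [Fintype ι] (w : ι → ℕ) (k : ℕ)
    (F : MvPolynomial ι K) : MvPolynomial ι K :=
  ∑ e ∈ F.support, if ∑ i, e i * w i = k then MvPolynomial.monomial e (MvPolynomial.coeff e F) else 0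

lemma coeff_minComp {K ι : Type*} [Field K] [Fintype ι] (w : ι → ℕ) (k : ℕ)
    (F : MvPolynomial ι K) (e : ι →₀ ℕ) : MvPolynomial.coeff e (minComp w k F) =
      if ∑ i, e i * w i = k then MvPolynomial.coeff e F else 0 := by
  classical
  rw [minComp, MvPolynomial.coeff_sum]
  by_cases he : e ∈ F.support
  · rw [Finset.sum_eq_single e]
    · split_ifs <;> simp
    · intro b _ hb
      split_ifs
      · rw [MvPolynomial.coeff_monomial, if_neg hb]
      · simp
    · exact fun h => absurd he h
  · rw [Finset.sum_eq_zero]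
    · rw [MvPolynomial.notMem_support_iff.1 he]; simp
    · intro b hb
      have : b ≠ e := by rintro rfl; exact he hb
      split_ifs
      · rw [MvPolynomial.coeff_monomial, if_neg this]
      · simp

lemma eval_minComp {K ι : Type*} [Field K] [Fintype ι] (w : ι → ℕ) (k : ℕ)
    (F : MvPolynomial ι K) (v : ι → K) : MvPolynomial.eval v (minComp w k F) =
      ∑ e ∈ F.support, if ∑ i, e i * w i = k then
        MvPolynomial.coeff e F * ∏ i, (v i) ^ e i else 0 := by
  rw [minComp, map_sum]
  refine Finset.sum_congr rfl fun e he => ?_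
  split_ifs
  · rw [MvPolynomial.eval_monomial, Finsupp.prod_fintype _ _ (by simp)]
  · simp

lemma min_inv {K ι : Type*} [Field K] [Infinite K] [Fintype ι] (w : ι → ℕ) (k : ℕ)
    (F : MvPolynomial ι K) (hk : ∀ e ∈ F.support, k ≤ ∑ i, e i * w i)
    (p : ι → Polynomial K) (v v' : ι → K) (hp : ∀ i, (p i).eval 0 = v' i)
    (h : ∀ η : K, MvPolynomial.eval (fun i => η ^ w i * v i) F =
      MvPolynomial.eval (fun i => η ^ w i * (p i).eval η) F) :
    MvPolynomial.eval v (minComp w k F) = MvPolynomial.eval v' (minComp w k F) := by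
  obtain ⟨q1, h1, h1'⟩ := min_aux w k F hk (fun i => Polynomial.C (v i))
  obtain ⟨q2, h2, h2'⟩ := min_aux w k F hk p
  have hev : ∀ (η : K) (r : ι → Polynomial K), (MvPolynomial.aeval r F : Polynomial K).eval η =
      MvPolynomial.eval (fun i => (r i).eval η) F := by
    intro η r
    have := MvPolynomial.map_aeval r (Polynomial.evalRingHom η) F
    simp only [Polynomial.coe_evalRingHom] at this
    rw [this]
    rw [MvPolynomial.coe_eval₂Hom, MvPolynomial.eval]
    congr 1
    ext; simp
  have h3 : (Polynomial.X ^ k * q1) = Polynomial.X ^ k * q2 := by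
    rw [← h1, ← h2]
    refine Polynomial.funext fun η => ?_
    rw [hev, hev]
    simp only [Polynomial.eval_mul, Polynomial.eval_pow, Polynomial.eval_X, Polynomial.eval_C]
    exact h η
  have h4 : q1 = q2 := mul_left_cancel₀ (pow_ne_zero k Polynomial.X_ne_zero) h3
  rw [eval_minComp, eval_minComp]
  rw [h4, h2'] at h1'
  simp only [Polynomial.eval_C, hp] at h1'
  exact h1'.symm

lemma torus_weight {K ι : Type*} [Field K] [Infinite K] [Fintype ι]
    (G : MvPolynomial ι K) (u u' : ι → ℕ) (D : ℕ)
    (h : ∀ t : K, t ≠ 0 → ∀ v : ι → K, MvPolynomial.eval (fun i => t ^ u i * v i) G =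
      t ^ D * MvPolynomial.eval (fun i => t ^ u' i * v i) G)
    (e : ι →₀ ℕ) (he : e ∈ G.support) : ∑ i, e i * u i = D + ∑ i, e i * u' i := by
  classical
  have key : ∀ (t : K) (u : ι → ℕ), MvPolynomial.coeff e (MvPolynomial.aeval
      (fun i => MvPolynomial.C (t ^ u i) * MvPolynomial.X i : ι → MvPolynomial ι K) G) =
      t ^ (∑ i, e i * u i) * MvPolynomial.coeff e G := by
    intro t u
    rw [MvPolynomial.aeval_def, MvPolynomial.eval₂_eq', MvPolynomial.coeff_sum]
    have : ∀ b : ι →₀ ℕ, (algebraMap K (MvPolynomial ι K)) (MvPolynomial.coeff b G) *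
        ∏ i, (MvPolynomial.C (t ^ u i) * MvPolynomial.X i) ^ b i =
        MvPolynomial.monomial b (t ^ (∑ i, b i * u i) * MvPolynomial.coeff b G) := by
      intro b
      rw [MvPolynomial.monomial_eq, Finsupp.prod_fintype _ _ (by simp)]
      simp only [mul_pow, Finset.prod_mul_distrib, ← pow_mul, ← map_pow, ← map_prod,
        Finset.prod_pow_eq_pow_sum, MvPolynomial.algebraMap_eq, map_mul]
      rw [Finset.sum_congr rfl fun i _ => mul_comm (u i) (b i)]
      ring
    simp only [this]
    rw [Finset.sum_eq_single e]
    · simp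
    · intro b _ hb; rw [MvPolynomial.coeff_monomial, if_neg hb]
    · exact fun h => absurd he h
  have hpt : ∀ t : K, t ≠ 0 → t ^ (∑ i, e i * u i) = t ^ (D + ∑ i, e i * u' i) := by
    intro t ht
    have h1 : MvPolynomial.aeval
      (fun i => MvPolynomial.C (t ^ u i) * MvPolynomial.X i : ι → MvPolynomial ι K) G =
      MvPolynomial.C (t ^ D) * MvPolynomial.aeval
      (fun i => MvPolynomial.C (t ^ u' i) * MvPolynomial.X i : ι → MvPolynomial ι K) G := by
      refine MvPolynomial.funext fun v => ?_
      have hev : ∀ (r : ι → MvPolynomial ι K),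
          MvPolynomial.eval v (MvPolynomial.aeval r G) =
          MvPolynomial.eval (fun i => MvPolynomial.eval v (r i)) G := by
        intro r
        have := MvPolynomial.map_aeval r (MvPolynomial.eval v) G
        rw [this]
        rw [MvPolynomial.coe_eval₂Hom, MvPolynomial.eval]
        congr 1
        ext; simp
      rw [map_mul, hev, hev]
      simpa using h t ht v
    have h2 := congrArg (MvPolynomial.coeff e) h1
    rw [MvPolynomial.coeff_C_mul, key, key, ← mul_assoc, ← pow_add] at h2
    exact mul_right_cancel₀ (MvPolynomial.mem_support_iff.1 he) h2
  have hpoly : (Polynomial.X * Polynomial.X ^ (∑ i, e i * u i) : Polynomial K) =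
      Polynomial.X * Polynomial.X ^ (D + ∑ i, e i * u' i) := by
    refine Polynomial.funext fun t => ?_
    by_cases ht : t = 0
    · simp [ht]
    · simp [hpt t ht]
  have := congrArg Polynomial.natDegree hpoly
  rw [← pow_succ', ← pow_succ', Polynomial.natDegree_X_pow, Polynomial.natDegree_X_pow] at this
  omega

lemma mv_eval_aeval {K σ ι : Type*} [Field K] (v : ι → K) (r : σ → MvPolynomial ι K)
    (G : MvPolynomial σ K) : MvPolynomial.eval v (MvPolynomial.aeval r G) =
          MvPolynomial.eval (fun i => MvPolynomial.eval v (r i)) G := by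
  have := MvPolynomial.map_aeval r (MvPolynomial.eval v) G
  rw [this]
  rw [MvPolynomial.coe_eval₂Hom, MvPolynomial.eval]
  congr 1
  ext; simp


/-- variables of the generic tuple -/
abbrev XV (m n : ℕ) := Fin (m+1) × Fin n × Fin n
/-- row variables -/
abbrev YV (m n : ℕ) := Bool × Fin ((m+1)*n) × Fin n

/-- the substitution -/
noncomputable def ysub (K : Type) [Field K] (m n : ℕ) (p : XV m n) : MvPolynomial (YV m n) K :=
  ∑ s : Fin ((m+1)*n), if s.divNat = p.1 then
    MvPolynomial.X (false, s, p.2.1) * MvPolynomial.X (true, s, p.2.2) else 0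

/-- the substitution, on polynomials -/
noncomputable def tilde (K : Type) [Field K] (m n : ℕ) :
    MvPolynomial (XV m n) K →ₐ[K] MvPolynomial (YV m n) K := MvPolynomial.aeval (ysub K m n)

/-- the tuple attached to a point -/
noncomputable def ymat {K : Type} [Field K] {m n : ℕ} (v : YV m n → K) (i : Fin (m+1)) :
    Matrix (Fin n) (Fin n) K :=
  Matrix.of fun c c' => ∑ s : Fin ((m+1)*n), if s.divNat = i then
    v (false, s, c) * v (true, s, c') else 0

lemma eval_tilde {K : Type} [Field K] {m n : ℕ} (v : YV m n → K) (F : MvPolynomial (XV m n) K) :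
    MvPolynomial.eval v (tilde K m n F) = MvPolynomial.eval (matCoords (ymat v)) F := by
  rw [tilde, mv_eval_aeval]
  congr 2
  funext p
  simp only [ysub, map_sum, matCoords, ymat, Matrix.of_apply]
  refine Finset.sum_congr rfl fun s _ => ?_
  split_ifs <;> simp

lemma tilde_injective {K : Type} [Field K] [Infinite K] {m n : ℕ} :
    Function.Injective (tilde K m n) := by
  rw [injective_iff_map_eq_zero]
  intro F hF
  refine MvPolynomial.funext fun x => ?_
  have h := eval_tilde (fun v : YV m n => if v.1 then x (v.2.1.divNat, v.2.1.modNat, v.2.2)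
    else if v.2.1.modNat = v.2.2 then 1 else 0) F
  rw [hF, map_zero] at h
  rw [map_zero, h]
  congr 2
  funext p
  obtain ⟨i, c, c'⟩ := p
  simp only [matCoords, ymat, Matrix.of_apply]
  rw [Finset.sum_eq_single (finProdFinEquiv (i, c))]
  · have h1 : (finProdFinEquiv (i, c)).divNat = i :=
      congrArg Prod.fst (finProdFinEquiv.symm_apply_apply (i, c))
    have h2 : (finProdFinEquiv (i, c)).modNat = c :=
      congrArg Prod.snd (finProdFinEquiv.symm_apply_apply (i, c))
    simp [h1, h2]
  · intro s _ hs
    by_cases h1 : s.divNat = i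
    · have h3 : ¬ s.modNat = c := by
        intro h3
        apply hs
        rw [← h1, ← h3]
        exact (finProdFinEquiv.apply_symm_apply s).symm
      simp only [h3, if_false, Bool.false_eq_true, zero_mul, ite_self]
    · rw [if_neg h1]
  · simp

/-- semi-invariants of weight `d` -/
def IsF {K : Type} [Field K] {m n : ℕ} (d : ℕ) (F : MvPolynomial (XV m n) K) : Prop :=
  ∀ A B : Matrix (Fin n) (Fin n) K, A.det ≠ 0 → B.det ≠ 0 →
    ∀ X : Fin (m+1) → Matrix (Fin n) (Fin n) K,
      MvPolynomial.eval (matCoords fun i => A.transpose * X i * B) F =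
        (A.det * B.det) ^ d * MvPolynomial.eval (matCoords X) F

/-- act on one side by a matrix -/
def ract {K : Type} [Field K] {m n : ℕ} (b : Bool) (E : Matrix (Fin n) (Fin n) K)
    (v : YV m n → K) : YV m n → K :=
  fun x => if x.1 = b then ∑ c0, v (b, x.2.1, c0) * E c0 x.2.2 else v x

lemma eval_ract {K : Type} [Field K] {m n d : ℕ} {F : MvPolynomial (XV m n) K} (hF : IsF d F)
    (b : Bool) (E : Matrix (Fin n) (Fin n) K) (hE : E.det ≠ 0) (v : YV m n → K) :
    MvPolynomial.eval (ract b E v) (tilde K m n F) =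
      E.det ^ d * MvPolynomial.eval v (tilde K m n F) := by
  rw [eval_tilde, eval_tilde]
  cases b
  · have := hF E 1 hE (by simp) (ymat v)
    rw [Matrix.det_one, mul_one] at this
    rw [← this]
    congr 3
    funext i
    ext c c'
    rw [Matrix.mul_one]
    simp only [ymat, ract, Matrix.of_apply, Matrix.mul_apply, Matrix.transpose_apply,
      Finset.mul_sum, if_true, reduceCtorEq, if_false, Bool.true_eq_false]
    rw [Finset.sum_comm]
    refine Finset.sum_congr rfl fun s _ => ?_
    split_ifs
    · rw [Finset.sum_mul]
      refine Finset.sum_congr rfl fun c0 _ => ?_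
      ring
    · simp
  · have := hF 1 E (by simp) hE (ymat v)
    rw [Matrix.det_one, one_mul] at this
    rw [← this]
    congr 3
    funext i
    ext c c'
    simp only [ymat, ract, Matrix.of_apply, Matrix.transpose_one, Matrix.one_mul, Matrix.mul_apply,
      Finset.sum_mul, if_true, reduceCtorEq, if_false, Bool.false_eq_true]
    rw [Finset.sum_comm]
    refine Finset.sum_congr rfl fun s _ => ?_
    split_ifs
    · rw [Finset.mul_sum]
      refine Finset.sum_congr rfl fun c0 _ => ?_
      ring
    · simp

/-- the weight -/
def yw (m n : ℕ) (x : YV m n) : ℕ := if x.1 then 0 else x.2.1.modNat.val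

lemma colsum {K : Type} [Field K] [Infinite K] {m n d : ℕ} {F : MvPolynomial (XV m n) K} (hF : IsF d F)
    (e : YV m n →₀ ℕ) (he : e ∈ (tilde K m n F).support) (b : Bool) (c : Fin n) :
    ∑ s, e (b, s, c) = d := by
  have h := torus_weight (tilde K m n F) (fun x => if x.1 = b ∧ x.2.2 = c then 1 else 0)
    (fun _ => 0) d ?_ e he
  · simp only [mul_zero, Finset.sum_const_zero, add_zero] at h
    rw [← h, Fintype.sum_prod_type, Finset.sum_eq_single b, Fintype.sum_prod_type]
    · simp
    · intro b' _ hb'; simp [hb']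
    · simp
  · intro t ht v
    have hdet : (Matrix.diagonal fun c' : Fin n => if c' = c then t else 1).det = t := by
      rw [Matrix.det_diagonal]; simp
    have := eval_ract hF b (Matrix.diagonal fun c' => if c' = c then t else 1) (by rwa [hdet]) v
    rw [hdet] at this
    simp only [pow_zero, one_mul]
    rw [← this]
    congr 2
    funext x
    obtain ⟨b', s, c'⟩ := x
    simp only [ract]
    by_cases hb : b' = b
    · subst hb
      simp only [true_and, if_true, Matrix.diagonal_apply]
      by_cases hc : c' = c <;> simp [hc, mul_comm]
    · simp [hb]

lemma rowsum {K : Type} [Field K] [Infinite K] {m n : ℕ} (F : MvPolynomial (XV m n) K)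
    (e : YV m n →₀ ℕ) (he : e ∈ (tilde K m n F).support) (s : Fin ((m+1)*n)) :
    ∑ c, e (false, s, c) = ∑ c, e (true, s, c) := by
  have h := torus_weight (tilde K m n F) (fun x => if x.1 = false ∧ x.2.1 = s then 1 else 0)
    (fun x => if x.1 = true ∧ x.2.1 = s then 1 else 0) 0 ?_ e he
  · simp only [mul_ite, mul_one, mul_zero, zero_add] at h
    have h2 : ∀ b : Bool, ∑ x : YV m n, (if x.1 = b ∧ x.2.1 = s then e x else 0) =
        ∑ c, e (b, s, c) := by
      intro b
      rw [Fintype.sum_prod_type, Finset.sum_eq_single b, Fintype.sum_prod_type,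
        Finset.sum_eq_single s]
      · simp
      · intro s' _ hs'; simp [hs']
      · simp
      · intro b' _ hb'; simp [hb']
      · simp
    rw [h2, h2] at h
    exact h
  · intro t ht v
    rw [pow_zero, one_mul, eval_tilde, eval_tilde]
    congr 3
    funext i
    ext c c'
    simp only [ymat, Matrix.of_apply]
    refine Finset.sum_congr rfl fun s' _ => ?_
    by_cases hs : s' = s
    · subst hs; simp only [and_self, if_true, reduceCtorEq, false_and, if_false, pow_zero, pow_one, one_mul]; split_ifs <;> ring
    · simp [hs]

section inv
variable {K : Type} [Field K] [Infinite K] {m n d : ℕ} {F : MvPolynomial (XV m n) K}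

/-- right invariance of the lowest component -/
lemma min_right (hF : IsF d F) (k : ℕ)
    (hk : ∀ e ∈ (tilde K m n F).support, k ≤ ∑ i, e i * yw m n i) (b : Bool)
    (E : Matrix (Fin n) (Fin n) K) (hE : E.det = 1) (v : YV m n → K) :
    MvPolynomial.eval (ract b E v) (minComp (yw m n) k (tilde K m n F)) =
    MvPolynomial.eval v (minComp (yw m n) k (tilde K m n F)) := by
  refine min_inv (yw m n) k _ hk (fun i => Polynomial.C (v i)) _ _ (by simp) ?_
  intro η
  have h := eval_ract hF b E (by rw [hE]; exact one_ne_zero) (fun i => η ^ yw m n i * v i)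
  rw [hE, one_pow, one_mul] at h
  simp only [Polynomial.eval_C]
  rw [← h]
  congr 2
  funext x
  obtain ⟨b', s, c⟩ := x
  by_cases hb : b' = b
  · subst hb
    simp only [ract, if_true, Finset.mul_sum]
    refine Finset.sum_congr rfl fun c0 _ => ?_
    simp only [yw]
    ring
  · simp [ract, hb]

/-- left elementary action -/
def lact (b : Bool) (s0 s1 : Fin ((m+1)*n)) (t : K) (v : YV m n → K) : YV m n → K :=
  fun x => if x.1 = b ∧ x.2.1 = s1 then v x + t * v (b, s0, x.2.2) else v x

lemma min_left (k : ℕ)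
    (hk : ∀ e ∈ (tilde K m n F).support, k ≤ ∑ i, e i * yw m n i) (b : Bool)
    (s0 s1 : Fin ((m+1)*n)) (hdiv : s0.divNat = s1.divNat)
    (hmod : s1.modNat.val = s0.modNat.val + 1) (t : K) (v : YV m n → K) :
    MvPolynomial.eval (lact b s0 s1 t v) (minComp (yw m n) k (tilde K m n F)) =
    MvPolynomial.eval v (minComp (yw m n) k (tilde K m n F)) := by
  have hne : s0 ≠ s1 := by rintro rfl; omega
  have hmod' : s1.val % n = s0.val % n + 1 := hmod
  refine min_inv (yw m n) k _ hk (fun x => if x.1 = !b ∧ x.2.1 = s0 then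
    Polynomial.C (v x) + Polynomial.X * Polynomial.C (t * v (!b, s1, x.2.2))
    else Polynomial.C (v x)) _ _ ?_ ?_
  · intro x; split_ifs <;> simp
  intro η
  rw [eval_tilde, eval_tilde]
  congr 3
  funext i
  ext c c'
  simp only [ymat, Matrix.of_apply]
  have hsplit : ∀ f : Fin ((m+1)*n) → K, ∑ s, f s =
      (f s0 + f s1) + ∑ s ∈ (Finset.univ.erase s0).erase s1, f s := by
    intro f
    rw [← Finset.add_sum_erase _ f (Finset.mem_univ s0),
      ← Finset.add_sum_erase _ f (Finset.mem_erase.2 ⟨hne.symm, Finset.mem_univ s1⟩), add_assoc]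
  rw [hsplit, hsplit]
  congr 1
  · by_cases hi : s1.divNat = i
    · simp only [hdiv, hi, if_true]
      cases b <;> simp [lact, yw, hne, hne.symm, hmod', pow_succ] <;> ring
    · simp [hdiv, hi]
  · refine Finset.sum_congr rfl fun s hs => ?_
    simp only [Finset.mem_erase] at hs
    simp [lact, hs.1, hs.2.1]
end inv


/-- the monomial order -/
def ykey {m n : ℕ} (e : YV m n →₀ ℕ) :
    ℕᵒᵈ ×ₗ Lex ((Bool ×ₗ (Fin ((m+1)*n) ×ₗ Fin n)) → ℕ) :=
  toLex (OrderDual.toDual (∑ i, e i * yw m n i),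
    toLex fun x => e ((ofLex x).1, (ofLex (ofLex x).2).1, (ofLex (ofLex x).2).2))

lemma ykey_injective {m n : ℕ} : Function.Injective (ykey (m := m) (n := n)) := by
  intro e e' h
  have h2 := congrArg (fun z => (ofLex z).2) h
  ext ⟨b, s, c⟩
  exact congrFun h2 (toLex (b, toLex (s, c)))

lemma ykey_weight {m n : ℕ} {e e' : YV m n →₀ ℕ} (h : ykey e' ≤ ykey e) :
    ∑ i, e i * yw m n i ≤ ∑ i, e' i * yw m n i := by
  rcases Prod.Lex.le_iff.1 h with h1 | h1
  · exact le_of_lt h1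
  · exact le_of_eq (show ∑ i, e' i * yw m n i = ∑ i, e i * yw m n i from h1.1).symm

lemma ykey_lex {m n : ℕ} {e e' : YV m n →₀ ℕ} (h : ykey e' ≤ ykey e)
    (hw : ∑ i, e i * yw m n i = ∑ i, e' i * yw m n i) (b : Bool) (s : Fin ((m+1)*n)) (c : Fin n)
    (h1 : ∀ b' < b, ∀ s c, e' (b', s, c) = e (b', s, c))
    (h2 : ∀ s' < s, ∀ c, e' (b, s', c) = e (b, s', c))
    (h3 : ∀ c' < c, e' (b, s, c') = e (b, s, c')) : e' (b, s, c) ≤ e (b, s, c) := by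
  rcases Prod.Lex.le_iff.1 h with h4 | h4
  · exact absurd hw (ne_of_lt h4)
  · by_contra hlt
    push Not at hlt
    refine absurd h4.2 (not_le_of_gt ?_)
    refine ⟨toLex (b, toLex (s, c)), ?_, hlt⟩
    intro x hx
    rcases Prod.Lex.lt_iff.1 hx with h5 | ⟨h5, h6⟩
    · exact (h1 _ h5 _ _).symm
    · rcases Prod.Lex.lt_iff.1 h6 with h7 | ⟨h7, h8⟩
      · have := (h2 _ h7 (ofLex (ofLex x).2).2).symm
        have h5' : (ofLex x).1 = b := h5
        rw [← h5'] at this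
        exact this
      · have h5' : (ofLex x).1 = b := h5
        have h7' : (ofLex (ofLex x).2).1 = s := h7
        have := (h3 _ h8).symm
        rw [← h5', ← h7'] at this
        exact this

/-- table of an exponent -/
def ytab {m n : ℕ} (e : YV m n →₀ ℕ) (b : Bool) (s c : ℕ) : ℕ :=
  if h : s < (m+1)*n ∧ c < n then e (b, ⟨s, h.1⟩, ⟨c, h.2⟩) else 0

lemma ytab_val {m n : ℕ} (e : YV m n →₀ ℕ) (b : Bool) (s : Fin ((m+1)*n)) (c : Fin n) :
    ytab e b s.val c.val = e (b, s, c) := by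
  simp [ytab]

lemma fin_sum_lt (f : ℕ → ℕ) (M j : ℕ) (hj : j ≤ M) :
    ∑ i : Fin M, (if i.val < j then f i.val else 0) = ∑ i ∈ Finset.range j, f i := by
  rw [Fin.sum_univ_eq_sum_range (fun i => if i < j then f i else 0), ← Finset.sum_filter]
  congr 1
  ext i
  simp only [Finset.mem_filter, Finset.mem_range]
  omega

lemma ytB_full {m n : ℕ} (e : YV m n →₀ ℕ) (b : Bool) (s : Fin ((m+1)*n)) :
    tB (ytab e b) s.val n = ∑ c, e (b, s, c) := by
  rw [tB, ← Fin.sum_univ_eq_sum_range]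
  exact Finset.sum_congr rfl fun c _ => ytab_val e b s c

lemma ytP_full {m n : ℕ} (e : YV m n →₀ ℕ) (b : Bool) (c : Fin n) :
    tP (ytab e b) ((m+1)*n) c.val = ∑ s, e (b, s, c) := by
  rw [tP, ← Fin.sum_univ_eq_sum_range (fun s => ytab e b s c.val)]
  exact Finset.sum_congr rfl fun s _ => ytab_val e b s c

section lead
variable {K : Type} [Field K] [Infinite K] {m n d : ℕ} {F : MvPolynomial (XV m n) K}

lemma lead_right (hF : IsF d F) (e : YV m n →₀ ℕ) (he : e ∈ (tilde K m n F).support)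
    (hlead : ∀ e' ∈ (tilde K m n F).support, ykey e' ≤ ykey e) (b : Bool) (c c1 : Fin n)
    (hc : c1.val = c.val + 1) (j : Fin ((m+1)*n)) :
    (∑ i, if i ≤ j then e (b, i, c1) else 0) ≤ ∑ i, if i < j then e (b, i, c) else 0 := by
  have hcne : c ≠ c1 := by rintro rfl; omega
  have hk : ∀ e' ∈ (tilde K m n F).support, ∑ i, e i * yw m n i ≤ ∑ i, e' i * yw m n i :=
    fun e' he' => ykey_weight (hlead e' he')
  refine two_line ((m+1)*n) (fun i => ((b, i, c) : YV m n)) (fun i => (b, i, c1))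
    (fun i i' h => by simpa using h) (fun i i' h => by simpa using h)
    (fun i j => by simp [hcne])
    (fun t v => if v.1 = b ∧ v.2.2 = c1 then MvPolynomial.X v +
        MvPolynomial.C t * MvPolynomial.X (b, v.2.1, c) else MvPolynomial.X v)
    (by simp) ?_ (minComp (yw m n) (∑ i, e i * yw m n i) (tilde K m n F)) ?_ e ?_ ?_ j
  · rintro t ⟨b', s, c'⟩ hv
    have : ¬ (b' = b ∧ c' = c1) := by rintro ⟨rfl, rfl⟩; exact hv s rfl
    simp [this]
  · intro t
    refine MvPolynomial.funext fun v => ?_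
    rw [mv_eval_aeval, ← min_right hF _ hk b (Matrix.transvection c c1 t)
      (Matrix.det_transvection_of_ne c c1 hcne t) v]
    congr 2
    funext x
    obtain ⟨b', s, c'⟩ := x
    by_cases hb : b' = b
    · subst hb
      simp only [ract, Matrix.transvection, if_true, Matrix.add_apply, Matrix.one_apply,
        Matrix.single_apply, mul_add, Finset.sum_add_distrib, true_and]
      by_cases hc' : c' = c1
      · subst hc'
        simp [mul_comm]
      · simp [hc', Ne.symm hc']
    · simp [ract, hb]
  · rw [MvPolynomial.mem_support_iff, coeff_minComp, if_pos rfl]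
    exact MvPolynomial.mem_support_iff.1 he
  · intro e' he' hoff hsum j hj
    rw [MvPolynomial.mem_support_iff, coeff_minComp] at he'
    have hw : ∑ i, e' i * yw m n i = ∑ i, e i * yw m n i := by
      by_contra h; rw [if_neg h] at he'; exact he' rfl
    rw [if_pos hw] at he'
    have hle := hlead e' (MvPolynomial.mem_support_iff.2 he')
    have h1 : e' (b, j, c) ≤ e (b, j, c) := by
      refine ykey_lex hle hw.symm b j c ?_ ?_ ?_
      · intro b' hb' s c'
        have : b ≠ b' := hb'.ne'
        exact hoff _ (fun i => by simp [this]) (fun i => by simp [this])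
      · intro s' hs' c'
        by_cases h1 : c' = c1
        · subst h1; exact hj s' hs'
        · by_cases h2 : c' = c
          · subst h2
            have := hsum s'
            have := hj s' hs'
            omega
          · exact hoff _ (fun i => by simp [Ne.symm h2]) (fun i => by simp [Ne.symm h1])
      · intro c' hc'
        have hc'' : c'.val < c.val := hc'
        exact hoff _ (fun i => by simp [hc'.ne']) (fun i => by
          have : c1 ≠ c' := by rintro rfl; omega
          simp [this])
    have := hsum j
    show e (b, j, c1) ≤ e' (b, j, c1)
    omega

lemma lead_left (e : YV m n →₀ ℕ) (he : e ∈ (tilde K m n F).support)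
    (hlead : ∀ e' ∈ (tilde K m n F).support, ykey e' ≤ ykey e) (b : Bool)
    (s0 s1 : Fin ((m+1)*n)) (hs : s1.val = s0.val + 1) (hdiv : s0.divNat = s1.divNat)
    (hmod : s1.modNat.val = s0.modNat.val + 1) (j : Fin n) :
    (∑ i, if i ≤ j then e (b, s1, i) else 0) ≤ ∑ i, if i < j then e (b, s0, i) else 0 := by
  have hsne : s0 ≠ s1 := by rintro rfl; omega
  have hk : ∀ e' ∈ (tilde K m n F).support, ∑ i, e i * yw m n i ≤ ∑ i, e' i * yw m n i :=
    fun e' he' => ykey_weight (hlead e' he')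
  refine two_line n (fun i => ((b, s0, i) : YV m n)) (fun i => (b, s1, i))
    (fun i i' h => by simpa using h) (fun i i' h => by simpa using h)
    (fun i j => by simp [hsne])
    (fun t v => if v.1 = b ∧ v.2.1 = s1 then MvPolynomial.X v +
        MvPolynomial.C t * MvPolynomial.X (b, s0, v.2.2) else MvPolynomial.X v)
    (by simp) ?_ (minComp (yw m n) (∑ i, e i * yw m n i) (tilde K m n F)) ?_ e ?_ ?_ j
  · rintro t ⟨b', s, c'⟩ hv
    have : ¬ (b' = b ∧ s = s1) := by rintro ⟨rfl, rfl⟩; exact hv c' rfl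
    simp [this]
  · intro t
    refine MvPolynomial.funext fun v => ?_
    rw [mv_eval_aeval, ← min_left _ hk b s0 s1 hdiv hmod t v]
    congr 2
    funext x
    simp only [lact]
    split_ifs <;> simp
  · rw [MvPolynomial.mem_support_iff, coeff_minComp, if_pos rfl]
    exact MvPolynomial.mem_support_iff.1 he
  · intro e' he' hoff hsum j hj
    rw [MvPolynomial.mem_support_iff, coeff_minComp] at he'
    have hw : ∑ i, e' i * yw m n i = ∑ i, e i * yw m n i := by
      by_contra h; rw [if_neg h] at he'; exact he' rfl
    rw [if_pos hw] at he'
    have hle := hlead e' (MvPolynomial.mem_support_iff.2 he')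
    have h1 : e' (b, s0, j) ≤ e (b, s0, j) := by
      refine ykey_lex hle hw.symm b s0 j ?_ ?_ ?_
      · intro b' hb' s c'
        have : b ≠ b' := hb'.ne'
        exact hoff _ (fun i => by simp [this]) (fun i => by simp [this])
      · intro s' hs' c'
        have hs'' : s'.val < s0.val := hs'
        have h1 : s1 ≠ s' := by rintro rfl; omega
        exact hoff _ (fun i => by simp [hs'.ne']) (fun i => by simp [h1])
      · intro c' hc'
        have := hsum c'
        have := hj c' hc'
        omega
    have := hsum j
    show e (b, s1, j) ≤ e' (b, s1, j)
    omega

lemma lead_good (hF : IsF d F) (e : YV m n →₀ ℕ) (he : e ∈ (tilde K m n F).support)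
    (hlead : ∀ e' ∈ (tilde K m n F).support, ykey e' ≤ ykey e) (b : Bool) :
    GoodTab (ytab e b) n ((m+1)*n) d (fun s => s / n) where
  hA0 := by
    intro s hs c
    rw [ytab, dif_neg]; omega
  hR := by
    intro s hs c hc
    have h := lead_right hF e he hlead b ⟨c, by omega⟩ ⟨c+1, hc⟩ rfl ⟨s, hs⟩
    rw [tP, tP, ← fin_sum_lt _ _ _ (Nat.succ_le_of_lt hs), ← fin_sum_lt _ _ _ hs.le]
    convert h using 2 with i _ i _
    · rw [← ytab_val]
      congr 1
      simp only [Nat.lt_succ_iff, Fin.le_def]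
    · rw [← ytab_val]
      rfl
  hL := by
    intro s hs hb c hc
    have hdm1 := Nat.div_add_mod s n
    have hdm2 := Nat.div_add_mod (s+1) n
    have hb : s / n = (s+1) / n := hb
    rw [← hb] at hdm2
    have h := lead_left e he hlead b ⟨s, by omega⟩ ⟨s+1, hs⟩ rfl (Fin.ext hb)
      (show (s+1) % n = s % n + 1 by omega) ⟨c, hc⟩
    rw [tB, tB, ← fin_sum_lt _ _ _ (Nat.succ_le_of_lt hc), ← fin_sum_lt _ _ _ hc.le]
    convert h using 2 with i _ i _
    · rw [← ytab_val]
      congr 1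
      simp only [Nat.lt_succ_iff, Fin.le_def]
    · rw [← ytab_val]
      rfl
  hd := by
    intro c hc
    rw [← colsum hF e he b ⟨c, hc⟩, ← ytP_full]
  hblk := fun a b h => Nat.div_le_div_right h

lemma lead_rows (e : YV m n →₀ ℕ) (he : e ∈ (tilde K m n F).support) (s : ℕ) :
    tB (ytab e true) s n = tB (ytab e false) s n := by
  by_cases hs : s < (m+1)*n
  · have h1 := ytB_full e true ⟨s, hs⟩
    have h2 := ytB_full e false ⟨s, hs⟩
    simp only at h1 h2
    rw [h1, h2, rowsum F e he]
  · simp [tB, ytab, hs]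
end lead


/-- block/level counts -/
def bcnt {d n D M : ℕ} (h : Fin d × Fin n → Fin D × Fin M) (i k l : ℕ) : ℕ :=
  (Finset.univ.filter fun x => (h x).2.val / n = i ∧ (h x).1.val = k ∧ x.1.val = l).card
/-- row/column counts -/
def acnt {d n D M : ℕ} (h : Fin d × Fin n → Fin D × Fin M) (s c : ℕ) : ℕ :=
  (Finset.univ.filter fun x => (h x).2.val = s ∧ x.2.val = c).card

/-- image of `h` is the diagram of row lengths -/
structure OnDiag {d n D M : ℕ} (A : ℕ → ℕ → ℕ) (h : Fin d × Fin n → Fin D × Fin M) : Prop where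
  inj : Function.Injective h
  mem : ∀ x, (h x).1.val < tB A (h x).2.val n
  surj : ∀ k s, k < tB A s n → ∃ x, (h x).1.val = k ∧ (h x).2.val = s

lemma OnDiag.bcnt_eq {d n D M : ℕ} {A : ℕ → ℕ → ℕ} {h : Fin d × Fin n → Fin D × Fin M}
    (hh : OnDiag A h) (L : ℕ → ℕ → ℕ) (hL : ∀ x, L (h x).1.val (h x).2.val = x.1.val) (i k l : ℕ) :
    ((Finset.range M).filter fun s => s / n = i ∧ k < tB A s n ∧ L k s = l).card = bcnt h i k l := by
  symm
  refine Finset.card_bij (fun x _ => (h x).2.val) ?_ ?_ ?_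
  · intro x hx
    simp only [Finset.mem_filter, Finset.mem_univ, true_and, Finset.mem_range] at hx ⊢
    obtain ⟨h1, h2, h3⟩ := hx
    subst h2
    exact ⟨(h x).2.2, h1, hh.mem x, by rw [hL, h3]⟩
  · intro x hx y hy hxy
    simp only [Finset.mem_filter, Finset.mem_univ, true_and] at hx hy
    apply hh.inj
    ext
    · rw [hx.2.1, hy.2.1]
    · exact hxy
  · intro s hs
    simp only [Finset.mem_filter, Finset.mem_range] at hs
    obtain ⟨h1, h2, h3, h4⟩ := hs
    obtain ⟨x, hx1, hx2⟩ := hh.surj k s h3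
    refine ⟨x, ?_, hx2⟩
    simp only [Finset.mem_filter, Finset.mem_univ, true_and]
    refine ⟨by rw [hx2, h2], hx1, ?_⟩
    rw [← hL x, hx1, hx2, h4]

lemma OnDiag.acnt_eq {d n D M : ℕ} {A : ℕ → ℕ → ℕ} {h : Fin d × Fin n → Fin D × Fin M}
    (hh : OnDiag A h) (C : ℕ → ℕ → ℕ) (hC : ∀ x, C (h x).1.val (h x).2.val = x.2.val) (s c : ℕ) :
    ((Finset.range (tB A s n)).filter fun k => C k s = c).card = acnt h s c := by
  symm
  refine Finset.card_bij (fun x _ => (h x).1.val) ?_ ?_ ?_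
  · intro x hx
    simp only [Finset.mem_filter, Finset.mem_univ, true_and, Finset.mem_range] at hx ⊢
    obtain ⟨h1, h2⟩ := hx
    subst h1
    exact ⟨hh.mem x, by rw [hC, h2]⟩
  · intro x hx y hy hxy
    simp only [Finset.mem_filter, Finset.mem_univ, true_and] at hx hy
    apply hh.inj
    ext
    · exact hxy
    · rw [hx.1, hy.1]
  · intro k hk
    simp only [Finset.mem_filter, Finset.mem_range] at hk
    obtain ⟨h3, h4⟩ := hk
    obtain ⟨x, hx1, hx2⟩ := hh.surj k s h3
    refine ⟨x, ?_, hx1⟩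
    simp only [Finset.mem_filter, Finset.mem_univ, true_and]
    refine ⟨hx2, ?_⟩
    rw [← hC x, hx1, hx2, h4]

/-- standard filling as a map -/
structure IsStd {d n D M : ℕ} (A : ℕ → ℕ → ℕ) (h : Fin d × Fin n → Fin D × Fin M) : Prop
    extends OnDiag A h where
  hL : ∀ x, tL A (h x).1.val (h x).2.val = x.1.val
  hC : ∀ x, tC A (h x).1.val (h x).2.val = x.2.val

lemma GoodTab.exists_std {A : ℕ → ℕ → ℕ} {n M d D : ℕ} {blk : ℕ → ℕ} (hA : GoodTab A n M d blk)
    (hD : ∀ s, tB A s n ≤ D) : ∃ h : Fin d × Fin n → Fin D × Fin M, IsStd A h := by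
  have : ∀ x : Fin d × Fin n, ∃ r : Fin D × Fin M, r.1.val < tB A r.2.val n ∧
      tL A r.1.val r.2.val = x.1.val ∧ tC A r.1.val r.2.val = x.2.val := by
    intro x
    obtain ⟨s, hs, k, hk, h1, h2⟩ := hA.surj (l := x.1.val) (s := M) x.2.2
      (by rw [hA.hd _ x.2.2]; exact x.1.2)
    exact ⟨(⟨k, lt_of_lt_of_le hk (hD s)⟩, ⟨s, hs⟩), hk, h1, h2⟩
  choose h h1 h2 h3 using this
  refine ⟨h, ⟨⟨?_, h1, ?_⟩, h2, h3⟩⟩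
  · intro x y hxy
    ext
    · rw [← h2, ← h2, hxy]
    · rw [← h3, ← h3, hxy]
  · intro k s hk
    refine ⟨(⟨tL A k s, hA.specL_lt hk⟩, ⟨tC A k s, (hA.specC hk).1⟩), ?_⟩
    have := hA.inj (h1 (⟨tL A k s, hA.specL_lt hk⟩, ⟨tC A k s, (hA.specC hk).1⟩)) hk
      (by rw [h2]) (by rw [h3])
    exact ⟨this.2, this.1⟩

lemma GoodTab.side_uniq {A : ℕ → ℕ → ℕ} {n M d D : ℕ} (hA : GoodTab A n M d (fun s => s / n))
    {h h0 : Fin d × Fin n → Fin D × Fin M} (hh : OnDiag A h) (hh0 : IsStd A h0)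
    (hb : ∀ i k l, bcnt h i k l = bcnt h0 i k l)
    (hlex : ∀ s < M, (∀ s' < s, ∀ c < n, acnt h s' c = A s' c) →
      ∀ c < n, (∀ c' < c, acnt h s c' = A s c') → A s c ≤ acnt h s c) : h = h0 := by
  classical
  obtain ⟨L, hL⟩ : ∃ L : ℕ → ℕ → ℕ, ∀ x, L (h x).1.val (h x).2.val = x.1.val := by
    refine ⟨fun k s => if hx : ∃ x, (h x).1.val = k ∧ (h x).2.val = s then hx.choose.1.val else 0, ?_⟩
    intro x
    have hx : ∃ x', (h x').1.val = (h x).1.val ∧ (h x').2.val = (h x).2.val := ⟨x, rfl, rfl⟩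
    beta_reduce
    rw [dif_pos hx]
    have : hx.choose = x := hh.inj (Prod.ext (Fin.ext hx.choose_spec.1) (Fin.ext hx.choose_spec.2))
    rw [this]
  obtain ⟨C, hC⟩ : ∃ C : ℕ → ℕ → ℕ, ∀ x, C (h x).1.val (h x).2.val = x.2.val := by
    refine ⟨fun k s => if hx : ∃ x, (h x).1.val = k ∧ (h x).2.val = s then hx.choose.2.val else 0, ?_⟩
    intro x
    have hx : ∃ x', (h x').1.val = (h x).1.val ∧ (h x').2.val = (h x).2.val := ⟨x, rfl, rfl⟩
    beta_reduce
    rw [dif_pos hx]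
    have : hx.choose = x := hh.inj (Prod.ext (Fin.ext hx.choose_spec.1) (Fin.ext hx.choose_spec.2))
    rw [this]
  have key := hA.uniq L C ?_ ?_ ?_ ?_
  · funext x
    have h1 := key _ _ (hh.mem x)
    rw [hL, hC] at h1
    have := hA.inj (hh.mem x) (hh0.mem x) (by rw [← h1.1, hh0.hL]) (by rw [← h1.2, hh0.hC])
    exact Prod.ext (Fin.ext this.2) (Fin.ext this.1)
  · intro k s k' s' hk hk' e1 e2
    obtain ⟨x, rfl, rfl⟩ := hh.surj k s hk
    obtain ⟨x', rfl, rfl⟩ := hh.surj k' s' hk'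
    rw [hL, hL] at e1
    rw [hC, hC] at e2
    have : x = x' := Prod.ext (Fin.ext e1) (Fin.ext e2)
    subst this
    exact ⟨rfl, rfl⟩
  · intro k s hk
    obtain ⟨x, rfl, rfl⟩ := hh.surj k s hk
    rw [hC]; exact x.2.2
  · intro i k l
    rw [hh.bcnt_eq L hL, hh0.toOnDiag.bcnt_eq (tL A) hh0.hL, hb]
  · simp only [hh.acnt_eq C hC]
    exact hlex

lemma GoodTab.acnt_std {A : ℕ → ℕ → ℕ} {n M d D : ℕ} (hA : GoodTab A n M d (fun s => s / n))
    {h0 : Fin d × Fin n → Fin D × Fin M} (hh0 : IsStd A h0) (s c : ℕ) (hc : c < n) :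
    acnt h0 s c = A s c := by
  rw [← hh0.toOnDiag.acnt_eq (tC A) hh0.hC, hA.countC s c hc]

/-- minimal weight forces the image to be the diagram -/
lemma diag_of_weight {A : ℕ → ℕ → ℕ} {n M d D : ℕ} (hA : GoodTab A n M d (fun s => s / n))
    {h h0 : Fin d × Fin n → Fin D × Fin M} (hinj : Function.Injective h) (hh0 : OnDiag A h0)
    (hb : ∀ i k l, bcnt h i k l = bcnt h0 i k l)
    (hw : ∑ x, (h x).2.val % n ≤ ∑ x, (h0 x).2.val % n) : OnDiag A h := by
  classical
  let S : Finset (Fin D × Fin M) := Finset.univ.image h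
  let S0 : Finset (Fin D × Fin M) := Finset.univ.image h0
  have hcls : ∀ i k, (S.filter fun r => r.2.val / n = i ∧ r.1.val = k).card =
      (S0.filter fun r => r.2.val / n = i ∧ r.1.val = k).card := by
    have : ∀ (g : Fin d × Fin n → Fin D × Fin M), Function.Injective g → ∀ i k,
      ((Finset.univ.image g).filter fun r => r.2.val / n = i ∧ r.1.val = k).card =
        ∑ l ∈ Finset.range d, bcnt g i k l := by
      intro g hg i k
      rw [Finset.filter_image, Finset.card_image_of_injective _ hg]
      rw [Finset.card_eq_sum_card_fiberwise (f := fun x => x.1.val) (t := Finset.range d)]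
      · refine Finset.sum_congr rfl fun l _ => ?_
        rw [bcnt, Finset.filter_filter]
        congr 1
        ext x
        simp [and_assoc]
      · intro x _
        simp
    intro i k
    rw [this h hinj, this h0 hh0.inj]
    exact Finset.sum_congr rfl fun l _ => hb i k l
  have hmem0 : ∀ r : Fin D × Fin M, r ∈ S0 ↔ r.1.val < tB A r.2.val n := by
    intro r
    simp only [S0, Finset.mem_image, Finset.mem_univ, true_and]
    constructor
    · rintro ⟨x, rfl⟩; exact hh0.mem x
    · intro hr
      obtain ⟨x, h1, h2⟩ := hh0.surj _ _ hr
      exact ⟨x, Prod.ext (Fin.ext h1) (Fin.ext h2)⟩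
  let a : Fin D × Fin M → ℕ := fun r =>
    (S0.filter fun r' => r'.2.val / n = r.2.val / n ∧ r'.1.val = r.1.val).card
  -- membership through position
  have hdm : ∀ s, n * (s / n) + s % n = s := fun s => Nat.div_add_mod s n
  have hpos : ∀ r, r ∈ S0 ↔ r.2.val % n < a r := by
    intro r
    have hcard : a r = ((S0.filter fun r' => r'.2.val / n = r.2.val / n ∧ r'.1.val = r.1.val).image
        fun r' => r'.2.val % n).card := by
      rw [Finset.card_image_of_injOn]
      intro r1 h1 r2 h2 h12
      simp only [Finset.coe_filter, Set.mem_ofPred_eq] at h1 h2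
      have e1 := hdm r1.2.val
      have e2 := hdm r2.2.val
      rw [h1.2.1] at e1
      rw [h2.2.1] at e2
      simp only at h12
      refine Prod.ext (Fin.ext (by rw [h1.2.2, h2.2.2])) (Fin.ext (by omega))
    constructor
    · intro hr
      rw [hcard]
      have : Finset.range (r.2.val % n + 1) ⊆ ((S0.filter fun r' => r'.2.val / n = r.2.val / n ∧
          r'.1.val = r.1.val).image fun r' => r'.2.val % n) := by
        intro j hj
        rw [Finset.mem_range] at hj
        have hn : 0 < n := by
          rcases Nat.eq_zero_or_pos n with h | h
          · subst h
            have := (hmem0 r).1 hr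
            simp [tB] at this
          · exact h
        have hmodlt := Nat.mod_lt r.2.val hn
        have hj' : j < n := by omega
        have hq : (n * (r.2.val / n) + j) / n = r.2.val / n := by
          rw [Nat.mul_add_div hn, Nat.div_eq_of_lt hj', add_zero]
        have hm : (n * (r.2.val / n) + j) % n = j := by
          rw [Nat.mul_add_mod, Nat.mod_eq_of_lt hj']
        have hle : n * (r.2.val / n) + j ≤ r.2.val := by
          have := hdm r.2.val; omega
        rw [Finset.mem_image]
        refine ⟨(r.1, ⟨n * (r.2.val / n) + j, lt_of_le_of_lt hle r.2.2⟩), ?_, hm⟩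
        rw [Finset.mem_filter, hmem0]
        refine ⟨lt_of_lt_of_le ((hmem0 r).1 hr) (hA.lam_anti hle r.2.2 hq), hq, rfl⟩
      have := Finset.card_le_card this
      rw [Finset.card_range] at this
      omega
    · intro hr
      by_contra hnot
      have : ((S0.filter fun r' => r'.2.val / n = r.2.val / n ∧
          r'.1.val = r.1.val).image fun r' => r'.2.val % n) ⊆ Finset.range (r.2.val % n) := by
        intro j hj
        rw [Finset.mem_image] at hj
        obtain ⟨r', hr', rfl⟩ := hj
        rw [Finset.mem_filter, hmem0] at hr'
        rw [hmem0] at hnot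
        rw [Finset.mem_range]
        by_contra hge
        have e1 := hdm r.2.val
        have e2 := hdm r'.2.val
        rw [hr'.2.1] at e2
        have := hA.lam_anti (s := r.2.val) (s' := r'.2.val) (by omega) r'.2.2 hr'.2.1.symm
        rw [hr'.2.2] at hr'
        omega
      have := Finset.card_le_card this
      rw [Finset.card_range, ← hcard] at this
      omega
  -- sums of class functions agree
  have hsuma : ∑ r ∈ S, (a r : ℤ) = ∑ r ∈ S0, (a r : ℤ) := by
    let κ : Fin D × Fin M → ℕ × ℕ := fun r => (r.2.val / n, r.1.val)
    let φ : ℕ × ℕ → ℤ := fun p => ((S0.filter fun r' => r'.2.val / n = p.1 ∧ r'.1.val = p.2).card : ℤ)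
    have hφ : ∀ r, (a r : ℤ) = φ (κ r) := fun r => rfl
    have gen : ∀ T : Finset (Fin D × Fin M), ∑ r ∈ T, (a r : ℤ) =
        ∑ p ∈ Finset.univ.image κ,
          ((T.filter fun r => r.2.val / n = p.1 ∧ r.1.val = p.2).card : ℤ) * φ p := by
      intro T
      rw [← Finset.sum_fiberwise_of_maps_to (s := T) (t := Finset.univ.image κ) (g := κ)
        (fun r _ => Finset.mem_image_of_mem _ (Finset.mem_univ _))]
      refine Finset.sum_congr rfl fun p _ => ?_
      have : (T.filter fun r => κ r = p) = T.filter fun r => r.2.val / n = p.1 ∧ r.1.val = p.2 := by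
        ext r; simp [κ, Prod.ext_iff]
      rw [← this, Finset.sum_congr rfl (g := fun _ => φ p), Finset.sum_const, nsmul_eq_mul]
      intro r hr
      rw [hφ, (Finset.mem_filter.1 hr).2]
    rw [gen, gen]
    refine Finset.sum_congr rfl fun p _ => ?_
    rw [hcls]
  have hwS : ∑ r ∈ S, ((r.2.val % n : ℕ) : ℤ) ≤ ∑ r ∈ S0, ((r.2.val % n : ℕ) : ℤ) := by
    rw [Finset.sum_image (fun x _ y _ hxy => hinj hxy), Finset.sum_image (fun x _ y _ hxy => hh0.inj hxy)]
    exact_mod_cast hw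
  have hcardS : S.card = S0.card := by
    rw [Finset.card_image_of_injective _ hinj, Finset.card_image_of_injective _ hh0.inj]
  have hsub : S0 ⊆ S := by
    by_contra hns
    have hne : (S0 \ S).Nonempty := by
      rw [Finset.nonempty_iff_ne_empty]
      intro h; exact hns (Finset.sdiff_eq_empty_iff_subset.1 h)
    let ψ : Fin D × Fin M → ℤ := fun r => ((r.2.val % n : ℕ) : ℤ) - a r
    have h1 : ∑ r ∈ S, ψ r ≤ ∑ r ∈ S0, ψ r := by
      simp only [ψ, Finset.sum_sub_distrib]
      omega
    have e1 := Finset.sum_inter_add_sum_sdiff S S0 ψ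
    have e2 := Finset.sum_inter_add_sum_sdiff S0 S ψ
    rw [Finset.inter_comm] at e2
    have p1 : 0 ≤ ∑ r ∈ S \ S0, ψ r := by
      refine Finset.sum_nonneg fun r hr => ?_
      have := (Finset.mem_sdiff.1 hr).2
      rw [hpos] at this
      simp only [ψ]
      omega
    have p2 : ∑ r ∈ S0 \ S, ψ r < 0 := by
      refine Finset.sum_neg (fun r hr => ?_) hne
      have := (Finset.mem_sdiff.1 hr).1
      rw [hpos] at this
      simp only [ψ]
      omega
    omega
  have hSS : S0 = S := Finset.eq_of_subset_of_card_le hsub hcardS.le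
  refine ⟨hinj, ?_, ?_⟩
  · intro x
    rw [← hmem0, hSS]
    exact Finset.mem_image_of_mem _ (Finset.mem_univ _)
  · intro k s hk
    obtain ⟨x0, h1, h2⟩ := hh0.surj k s hk
    have : h0 x0 ∈ S := hsub (Finset.mem_image_of_mem _ (Finset.mem_univ _))
    obtain ⟨x, _, hx⟩ := Finset.mem_image.1 this
    exact ⟨x, by rw [hx, h1], by rw [hx, h2]⟩


lemma det_sum_expand {A J R : Type*} [CommRing A] [Fintype J] [DecidableEq J] [Fintype R]
    [DecidableEq R] (P Q : R → J → A) :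
    (Matrix.of fun x y => ∑ r, P r x * Q r y).det =
      ∑ g ∈ Finset.univ.filter (fun g : J → R => Function.Injective g),
        ∑ σ : Equiv.Perm J, Equiv.Perm.sign σ • ((∏ x, P (g x) (σ x)) * ∏ x, Q (g x) x) := by
  rw [Matrix.det_apply]
  simp only [Matrix.of_apply]
  have h1 : ∀ σ : Equiv.Perm J, ∏ i, ∑ r, P r (σ i) * Q r i =
      ∑ g : J → R, (∏ x, P (g x) (σ x)) * ∏ x, Q (g x) x := by
    intro σ
    rw [Finset.prod_univ_sum, Fintype.piFinset_univ]
    simp only [Finset.prod_mul_distrib]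
  simp only [h1, Finset.smul_sum]
  rw [Finset.sum_comm]
  symm
  refine Finset.sum_subset (Finset.filter_subset _ _) ?_
  intro g _ hg
  simp only [Finset.mem_filter, Finset.mem_univ, true_and] at hg
  rw [Function.Injective] at hg
  push Not at hg
  obtain ⟨x, y, hxy, hne⟩ := hg
  have : (Matrix.of fun i j => P (g j) i).det = 0 := by
    refine Matrix.det_zero_of_column_eq hne ?_
    intro i; simp [hxy]
  rw [Matrix.det_apply] at this
  simp only [Matrix.of_apply] at this
  simp only [← smul_mul_assoc]
  rw [← Finset.sum_mul, this, zero_mul]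

/-- exponent of the auxiliary variables -/
noncomputable def bof {m n d D : ℕ} (b : Bool) (h : Fin d × Fin n → Fin D × Fin ((m+1)*n)) :
    SV m D d →₀ ℕ := ∑ x, Finsupp.single (b, ((h x).2.divNat, (h x).1), x.1) 1
/-- exponent of the row variables -/
noncomputable def eof {m n d D : ℕ} (b : Bool) (h : Fin d × Fin n → Fin D × Fin ((m+1)*n)) :
    YV m n →₀ ℕ := ∑ x, Finsupp.single (b, (h x).2, x.2) 1

lemma sum_single_apply' {J ι : Type*} [Fintype J] [DecidableEq ι] (f : J → ι) (v : ι) :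
    (∑ x, Finsupp.single (f x) 1 : ι →₀ ℕ) v = (Finset.univ.filter fun x => f x = v).card := by
  rw [Finsupp.finsetSum_apply, Finset.card_filter]
  exact Finset.sum_congr rfl fun x _ => Finsupp.single_apply

lemma sum_single_wt {J ι : Type*} [Fintype J] [Fintype ι] [DecidableEq ι] (f : J → ι) (w : ι → ℕ) :
    ∑ i, (∑ x, Finsupp.single (f x) 1 : ι →₀ ℕ) i * w i = ∑ x, w (f x) := by
  simp only [Finsupp.finsetSum_apply, Finset.sum_mul]
  rw [Finset.sum_comm]
  refine Finset.sum_congr rfl fun x _ => ?_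
  rw [Finset.sum_eq_single (f x)]
  · simp
  · intro i _ hi; simp [Finsupp.single_apply, Ne.symm hi]
  · simp

section
variable {m n d D : ℕ}

lemma bof_apply (b : Bool) (h : Fin d × Fin n → Fin D × Fin ((m+1)*n)) (i : Fin (m+1)) (k : Fin D)
    (l : Fin d) : bof b h (b, (i, k), l) = bcnt h i.val k.val l.val := by
  rw [bof, sum_single_apply', bcnt]
  congr 1
  ext x
  simp only [Finset.mem_filter, Finset.mem_univ, true_and, Prod.mk.injEq, Fin.ext_iff,
    Fin.coe_divNat, and_assoc]

lemma bof_ne (b b' : Bool) (hb : b ≠ b') (h : Fin d × Fin n → Fin D × Fin ((m+1)*n)) (p) :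
    bof b h (b', p) = 0 := by
  rw [bof, sum_single_apply', Finset.card_eq_zero, Finset.filter_eq_empty_iff]
  intro x _ hx
  exact hb (congrArg Prod.fst hx)

lemma eof_apply (b : Bool) (h : Fin d × Fin n → Fin D × Fin ((m+1)*n)) (s) (c : Fin n) :
    eof b h (b, s, c) = acnt h s.val c.val := by
  rw [eof, sum_single_apply', acnt]
  congr 1
  ext x
  simp only [Finset.mem_filter, Finset.mem_univ, true_and, Prod.mk.injEq, Fin.ext_iff]

lemma eof_ne (b b' : Bool) (hb : b ≠ b') (h : Fin d × Fin n → Fin D × Fin ((m+1)*n)) (p) :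
    eof b h (b', p) = 0 := by
  rw [eof, sum_single_apply', Finset.card_eq_zero, Finset.filter_eq_empty_iff]
  intro x _ hx
  exact hb (congrArg Prod.fst hx)

lemma bcnt_of_bof (b : Bool) (h h0 : Fin d × Fin n → Fin D × Fin ((m+1)*n))
    (H : ∀ p, bof b h (b, p) = bof b h0 (b, p)) (i k l : ℕ) : bcnt h i k l = bcnt h0 i k l := by
  by_cases hr : i < m+1 ∧ k < D ∧ l < d
  · have := H ((⟨i, hr.1⟩, ⟨k, hr.2.1⟩), ⟨l, hr.2.2⟩)
    rw [bof_apply, bof_apply] at this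
    exact this
  · have : ∀ g : Fin d × Fin n → Fin D × Fin ((m+1)*n), bcnt g i k l = 0 := by
      intro g
      rw [bcnt, Finset.card_eq_zero, Finset.filter_eq_empty_iff]
      rintro x _ ⟨h1, h2, h3⟩
      apply hr
      refine ⟨?_, ?_, ?_⟩
      · rw [← h1]; exact (g x).2.divNat.2
      · rw [← h2]; exact (g x).1.2
      · rw [← h3]; exact x.1.2
    rw [this, this]

lemma wt_eof (h g : Fin d × Fin n → Fin D × Fin ((m+1)*n)) :
    ∑ i, (eof false h + eof true g) i * yw m n i = ∑ x, (h x).2.val % n := by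
  simp only [Finsupp.add_apply, add_mul, Finset.sum_add_distrib]
  rw [eof, eof, sum_single_wt, sum_single_wt]
  simp [yw]

lemma OnDiag.perm {M : ℕ} {A : ℕ → ℕ → ℕ} {h h' : Fin d × Fin n → Fin D × Fin M}
    (hh : OnDiag A h) (hh' : OnDiag A h') :
    ∃ ρ : Equiv.Perm (Fin d × Fin n), ∀ x, h x = h' (ρ x) := by
  have : ∀ x, ∃ y, h x = h' y := by
    intro x
    obtain ⟨y, h1, h2⟩ := hh'.surj _ _ (hh.mem x)
    exact ⟨y, Prod.ext (Fin.ext h1.symm) (Fin.ext h2.symm)⟩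
  choose f hf using this
  have hinj : Function.Injective f := by
    intro x y hxy
    apply hh.inj
    rw [hf, hf, hxy]
  exact ⟨Equiv.ofBijective f (Finite.injective_iff_bijective.1 hinj), hf⟩

lemma OnDiag.comp {M : ℕ} {A : ℕ → ℕ → ℕ} {h h' : Fin d × Fin n → Fin D × Fin M}
    (hh : OnDiag A h) (ρ : Equiv.Perm (Fin d × Fin n)) (H : ∀ x, h x = h' (ρ x)) : OnDiag A h' := by
  have H' : ∀ y, h' y = h (ρ.symm y) := fun y => by rw [H]; simp
  refine ⟨?_, ?_, ?_⟩
  · intro x y hxy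
    rw [H', H'] at hxy
    exact ρ.symm.injective (hh.inj hxy)
  · intro x; rw [H']; exact hh.mem _
  · intro k s hk
    obtain ⟨x, h1, h2⟩ := hh.surj k s hk
    exact ⟨ρ x, by rw [← H, h1], by rw [← H, h2]⟩

lemma OnDiag.congr {M : ℕ} {A A' : ℕ → ℕ → ℕ} {h : Fin d × Fin n → Fin D × Fin M}
    (hh : OnDiag A h) (H : ∀ s, tB A s n = tB A' s n) : OnDiag A' h :=
  ⟨hh.inj, fun x => by rw [← H]; exact hh.mem x, fun k s hk => hh.surj k s (by rwa [H])⟩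

lemma pair_uniq (e0 : YV m n →₀ ℕ)
    (hA : ∀ b, GoodTab (ytab e0 b) n ((m+1)*n) d (fun s => s / n))
    (hrow : ∀ s, tB (ytab e0 true) s n = tB (ytab e0 false) s n)
    (h0 g0 h g : Fin d × Fin n → Fin D × Fin ((m+1)*n))
    (hh0 : IsStd (ytab e0 false) h0) (hg0 : IsStd (ytab e0 true) g0)
    (he0 : eof false h0 + eof true g0 = e0)
    (hg : Function.Injective g) (σ : Equiv.Perm (Fin d × Fin n)) (hσ : ∀ x, h x = g (σ x))
    (hb : bof false h + bof true g = bof false h0 + bof true g0)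
    (hkey : ykey e0 ≤ ykey (eof false h + eof true g)) : h = h0 ∧ g = g0 := by
  have hb1 : ∀ i k l, bcnt h i k l = bcnt h0 i k l := by
    refine bcnt_of_bof false h h0 fun p => ?_
    have := DFunLike.congr_fun hb (false, p)
    simpa [bof_ne true false] using this
  have hb2 : ∀ i k l, bcnt g i k l = bcnt g0 i k l := by
    refine bcnt_of_bof true g g0 fun p => ?_
    have := DFunLike.congr_fun hb (true, p)
    simpa [bof_ne false true] using this
  have hinj : Function.Injective h := by
    intro x y hxy
    rw [hσ, hσ] at hxy
    exact σ.injective (hg hxy)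
  have hw := ykey_weight hkey
  have hw0 : ∑ i, e0 i * yw m n i = ∑ x, (h0 x).2.val % n := by
    rw [← wt_eof h0 g0, he0]
  have hdh : OnDiag (ytab e0 false) h := by
    refine diag_of_weight (hA false) hinj hh0.toOnDiag hb1 ?_
    rw [wt_eof, hw0] at hw
    exact hw
  have hdg : OnDiag (ytab e0 true) g := (hdh.comp σ hσ).congr fun s => (hrow s).symm
  have hweq : ∑ i, (eof false h + eof true g) i * yw m n i = ∑ i, e0 i * yw m n i := by
    rw [wt_eof, hw0]
    obtain ⟨ρ, hρ⟩ := hdh.perm hh0.toOnDiag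
    simp only [hρ]
    exact Equiv.sum_comp ρ (fun x => (h0 x).2.val % n)
  have hE1 : ∀ s c, (eof false h + eof true g) (false, s, c) = acnt h s.val c.val := by
    intro s c
    rw [Finsupp.add_apply, eof_apply, eof_ne true false (by simp), add_zero]
  have hE2 : ∀ s c, (eof false h + eof true g) (true, s, c) = acnt g s.val c.val := by
    intro s c
    rw [Finsupp.add_apply, eof_apply, eof_ne false true (by simp), zero_add]
  have h1 : h = h0 := by
    refine (hA false).side_uniq hdh hh0 hb1 ?_
    intro s hs h2 c hc h3
    have := ykey_lex hkey hweq false ⟨s, hs⟩ ⟨c, hc⟩ (by simp) ?_ ?_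
    · rw [hE1, ← ytab_val] at this
      exact this
    · intro s' hs' c'
      rw [hE1, ← ytab_val]
      exact (h2 s'.val hs' c'.val c'.2).symm
    · intro c' hc'
      rw [hE1, ← ytab_val]
      exact (h3 c'.val hc').symm
  refine ⟨h1, ?_⟩
  refine (hA true).side_uniq hdg hg0 hb2 ?_
  intro s hs h2 c hc h3
  have := ykey_lex hkey hweq true ⟨s, hs⟩ ⟨c, hc⟩ ?_ ?_ ?_
  · rw [hE2, ← ytab_val] at this
    exact this
  · intro b' hb' s' c'
    have : b' = false := by revert hb'; cases b' <;> simp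
    subst this
    rw [hE1, h1, ← ytab_val, (hA false).acnt_std hh0 _ _ c'.2]
  · intro s' hs' c'
    rw [hE2, ← ytab_val]
    exact (h2 s'.val hs' c'.val c'.2).symm
  · intro c' hc'
    rw [hE2, ← ytab_val]
    exact (h3 c'.val hc').symm
end


/-- generic matrices -/
noncomputable def genMat (K : Type) [Field K] (m n : ℕ) (i : Fin (m+1)) :
    Matrix (Fin n) (Fin n) (MvPolynomial (XV m n) K) :=
  Matrix.of fun c c' => MvPolynomial.X (i, c, c')

section
variable {K : Type} [Field K] {m n d D : ℕ}

/-- factor matrix entries -/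
noncomputable def pEnt (K : Type) [Field K] (m n d D : ℕ) (b : Bool) (r : Fin D × Fin ((m+1)*n))
    (x : Fin d × Fin n) : MvPolynomial (SV m D d) (MvPolynomial (YV m n) K) :=
  MvPolynomial.monomial (Finsupp.single (b, (r.2.divNat, r.1), x.1) 1)
    (MvPolynomial.monomial (Finsupp.single (b, r.2, x.2) 1) 1)

lemma prod_pEnt (b : Bool) (h : Fin d × Fin n → Fin D × Fin ((m+1)*n)) :
    ∏ x, pEnt K m n d D b (h x) x = MvPolynomial.monomial (bof b h)
      (MvPolynomial.monomial (eof b h) 1) := by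
  have gen : ∀ T : Finset (Fin d × Fin n), ∏ x ∈ T, pEnt K m n d D b (h x) x =
      MvPolynomial.monomial (∑ x ∈ T, Finsupp.single (b, ((h x).2.divNat, (h x).1), x.1) 1)
      (MvPolynomial.monomial (∑ x ∈ T, Finsupp.single (b, (h x).2, x.2) 1) 1) := by
    intro T
    classical
    induction T using Finset.induction_on with
    | empty => simp
    | insert a T ha ih =>
      rw [Finset.prod_insert ha, ih, Finset.sum_insert ha, Finset.sum_insert ha, pEnt,
        MvPolynomial.monomial_mul, MvPolynomial.monomial_mul, one_mul]
  exact gen Finset.univ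

lemma bigMat_tilde : bigMat D d (fun i => (genMat K m n i).map (tilde K m n)) =
    Matrix.of fun x y => ∑ r, pEnt K m n d D false r x * pEnt K m n d D true r y := by
  ext1 x y
  simp only [bigMat, Matrix.of_apply, Matrix.map_apply, genMat, tilde, MvPolynomial.aeval_X, ysub]
  rw [Fintype.sum_prod_type_right (f := fun r => pEnt K m n d D false r x * pEnt K m n d D true r y),
    Fintype.sum_prod_type]
  have h1 : ∀ (s : Fin ((m+1)*n)) (k : Fin D), pEnt K m n d D false (k, s) x * pEnt K m n d D true (k, s) y =
      MvPolynomial.X (false, (s.divNat, k), x.1) * MvPolynomial.X (true, (s.divNat, k), y.1) *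
      MvPolynomial.C (MvPolynomial.X (false, s, x.2) * MvPolynomial.X (true, s, y.2)) := by
    intro s k
    rw [pEnt, pEnt, MvPolynomial.X, MvPolynomial.X, MvPolynomial.X, MvPolynomial.X,
      MvPolynomial.monomial_mul, MvPolynomial.monomial_mul, MvPolynomial.monomial_mul,
      mul_comm (MvPolynomial.monomial _ _) (MvPolynomial.C _),
      MvPolynomial.C_mul_monomial]
    simp
  simp only [h1]
  have h2 : ∀ (i : Fin (m+1)) (k : Fin D),
      (MvPolynomial.X (false, (i, k), x.1) * MvPolynomial.X (true, (i, k), y.1) *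
        MvPolynomial.C (∑ s : Fin ((m+1)*n), if s.divNat = i then
          MvPolynomial.X (false, s, x.2) * MvPolynomial.X (true, s, y.2) else 0) :
          MvPolynomial (SV m D d) (MvPolynomial (YV m n) K)) =
      ∑ s : Fin ((m+1)*n), if s.divNat = i then
        MvPolynomial.X (false, (s.divNat, k), x.1) * MvPolynomial.X (true, (s.divNat, k), y.1) *
      MvPolynomial.C (MvPolynomial.X (false, s, x.2) * MvPolynomial.X (true, s, y.2)) else 0 := by
    intro i k
    rw [map_sum, Finset.mul_sum]
    refine Finset.sum_congr rfl fun s _ => ?_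
    split_ifs with h
    · rw [h]
    · simp
  simp only [h2]
  rw [Finset.sum_congr rfl fun i _ => Finset.sum_comm, Finset.sum_comm]
  refine Finset.sum_congr rfl fun s _ => ?_
  rw [Finset.sum_comm]
  refine Finset.sum_congr rfl fun k _ => ?_
  simp

lemma tilde_bigF (β : SV m D d →₀ ℕ) (e : YV m n →₀ ℕ) :
    MvPolynomial.coeff e (tilde K m n (bigF D d β (genMat K m n))) =
      ∑ g ∈ Finset.univ.filter (fun g : Fin d × Fin n → Fin D × Fin ((m+1)*n) => Function.Injective g),
        ∑ σ : Equiv.Perm (Fin d × Fin n), Equiv.Perm.sign σ •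
          (if bof false (fun x => g (σ.symm x)) + bof true g = β ∧
            eof false (fun x => g (σ.symm x)) + eof true g = e then (1:K) else 0) := by
  have h1 := bigF_map (tilde K m n).toRingHom D d β (genMat K m n)
  have h2 : tilde K m n (bigF D d β (genMat K m n)) =
    bigF D d β (fun i => (genMat K m n i).map (tilde K m n)) := h1
  rw [h2, bigF, bigMat_tilde, det_sum_expand, MvPolynomial.coeff_sum, MvPolynomial.coeff_sum]
  refine Finset.sum_congr rfl fun g _ => ?_
  rw [MvPolynomial.coeff_sum, MvPolynomial.coeff_sum]
  refine Finset.sum_congr rfl fun σ _ => ?_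
  have h3 : ∏ x, pEnt K m n d D false (g x) (σ x) =
      ∏ x, pEnt K m n d D false (g (σ.symm x)) x := by
    have := Equiv.prod_comp σ (fun x => pEnt K m n d D false (g (σ.symm x)) x)
    rw [← this]
    simp
  rw [h3, prod_pEnt, prod_pEnt, MvPolynomial.monomial_mul, MvPolynomial.monomial_mul,
    Units.smul_def, Units.smul_def, MvPolynomial.coeff_smul, MvPolynomial.coeff_smul,
    MvPolynomial.coeff_monomial]
  congr 1
  by_cases hb : bof false (fun x => g (σ.symm x)) + bof true g = β
  · rw [if_pos hb, MvPolynomial.coeff_monomial]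
    simp [hb]
  · rw [if_neg hb]
    simp [hb]

theorem lead_bigF (e0 : YV m n →₀ ℕ)
    (hA : ∀ b, GoodTab (ytab e0 b) n ((m+1)*n) d (fun s => s / n))
    (hrow : ∀ s, tB (ytab e0 true) s n = tB (ytab e0 false) s n)
    (hD : ∀ s, tB (ytab e0 false) s n ≤ D) :
    ∃ β : SV m D d →₀ ℕ,
      MvPolynomial.coeff e0 (tilde K m n (bigF D d β (genMat K m n))) ≠ 0 ∧
      ∀ e ∈ (tilde K m n (bigF D d β (genMat K m n))).support, ykey e ≤ ykey e0 := by
  obtain ⟨h0, hh0⟩ := (hA false).exists_std (D := D) hD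
  obtain ⟨g0, hg0⟩ := (hA true).exists_std (D := D) (fun s => by rw [hrow]; exact hD s)
  have he0 : eof false h0 + eof true g0 = e0 := by
    ext ⟨b, s, c⟩
    cases b
    · rw [Finsupp.add_apply, eof_apply, eof_ne true false (by simp), add_zero,
        (hA false).acnt_std hh0 _ _ c.2, ytab_val]
    · rw [Finsupp.add_apply, eof_apply, eof_ne false true (by simp), zero_add,
        (hA true).acnt_std hg0 _ _ c.2, ytab_val]
  obtain ⟨ρ, hρ⟩ := hh0.toOnDiag.perm (hg0.toOnDiag.congr hrow)
  have hh0' : (fun x => g0 (ρ.symm.symm x)) = h0 := by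
    funext x; rw [hρ]; simp
  refine ⟨bof false h0 + bof true g0, ?_, ?_⟩
  · rw [tilde_bigF, Finset.sum_eq_single g0, Finset.sum_eq_single ρ.symm]
    · rw [hh0', if_pos ⟨rfl, he0⟩]
      rcases Int.units_eq_one_or (Equiv.Perm.sign ρ.symm) with h | h <;> rw [h] <;> simp
    · intro σ _ hσ
      rw [if_neg, smul_zero]
      rintro ⟨hb, he⟩
      have := (pair_uniq e0 hA hrow h0 g0 _ g0 hh0 hg0 he0 hg0.inj σ.symm (fun x => rfl) hb
        (by rw [he])).1
      apply hσ
      rw [← hh0'] at this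
      have h2 : σ.symm = ρ := by
        ext1 x
        exact hg0.inj (congrFun this x)
      rw [← h2]; simp
    · simp
    · intro g hg hgne
      refine Finset.sum_eq_zero fun σ _ => ?_
      rw [if_neg, smul_zero]
      rintro ⟨hb, he⟩
      exact hgne (pair_uniq e0 hA hrow h0 g0 _ g hh0 hg0 he0 (Finset.mem_filter.1 hg).2 σ.symm
        (fun x => rfl) hb (by rw [he])).2
    · intro h
      exact absurd (Finset.mem_filter.2 ⟨Finset.mem_univ _, hg0.inj⟩) h
  · intro e he
    rw [MvPolynomial.mem_support_iff, tilde_bigF] at he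
    obtain ⟨g, hg, he⟩ := Finset.exists_ne_zero_of_sum_ne_zero he
    obtain ⟨σ, _, he⟩ := Finset.exists_ne_zero_of_sum_ne_zero he
    by_cases hc : bof false (fun x => g (σ.symm x)) + bof true g = bof false h0 + bof true g0 ∧
            eof false (fun x => g (σ.symm x)) + eof true g = e
    swap
    · rw [if_neg hc, smul_zero] at he; exact absurd rfl he
    obtain ⟨hb, rfl⟩ := hc
    rcases le_total (ykey (eof false (fun x => g (σ.symm x)) + eof true g)) (ykey e0) with h | h
    · exact h
    · obtain ⟨h1, h2⟩ := pair_uniq e0 hA hrow h0 g0 _ g hh0 hg0 he0 (Finset.mem_filter.1 hg).2 σ.symm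
        (fun x => rfl) hb h
      rw [h1, h2, he0]
end


section
variable {K : Type} [Field K] {m n d D : ℕ}

lemma eval_bigF (β : SV m D d →₀ ℕ) (Y : Fin (m+1) → Matrix (Fin n) (Fin n) K) :
    MvPolynomial.eval (matCoords Y) (bigF D d β (genMat K m n)) = bigF D d β Y := by
  rw [bigF_map]
  congr 1
  funext i
  ext c c'
  simp [genMat, matCoords]

lemma bigMat_conj (A B : Matrix (Fin n) (Fin n) K) (Y : Fin (m+1) → Matrix (Fin n) (Fin n) K) :
    bigMat D d (fun i => A * Y i * B) =
      Matrix.kroneckerMap (· * ·) (1 : Matrix (Fin d) (Fin d) (MvPolynomial (SV m D d) K))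
        (A.map MvPolynomial.C) * bigMat D d Y *
      Matrix.kroneckerMap (· * ·) (1 : Matrix (Fin d) (Fin d) (MvPolynomial (SV m D d) K))
        (B.map MvPolynomial.C) := by
  ext1 ⟨x, c⟩ ⟨y, c'⟩
  simp only [Matrix.mul_apply, Matrix.kroneckerMap_apply, Fintype.sum_prod_type, Matrix.one_apply,
    Matrix.map_apply, ite_mul, one_mul, zero_mul, mul_ite, mul_zero]
  have e1 : ∀ (x2 : Fin d) (x3 : Fin n), (∑ x_1 : Fin d, ∑ x_2 : Fin n,
      if x = x_1 then MvPolynomial.C (A c x_2) * bigMat D d Y (x_1, x_2) (x2, x3) else 0) =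
      ∑ x_2 : Fin n, MvPolynomial.C (A c x_2) * bigMat D d Y (x, x_2) (x2, x3) := by
    intro x2 x3
    rw [Finset.sum_eq_single x]
    · simp
    · intro b _ hb
      simp [Ne.symm hb]
    · simp
  rw [Finset.sum_eq_single y]
  · simp only [e1, if_true]
    simp only [bigMat, Matrix.of_apply, Matrix.mul_apply, map_sum, map_mul, Finset.mul_sum,
      Finset.sum_mul]
    rw [Finset.sum_comm]
    refine Finset.sum_congr rfl fun a _ => ?_
    rw [Finset.sum_comm]
    refine Finset.sum_congr rfl fun b _ => ?_
    refine Finset.sum_congr rfl fun p _ => ?_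
    ring
  · intro b _ hb
    simp [hb]
  · simp

lemma bigF_isF (β : SV m D d →₀ ℕ) : IsF d (bigF D d β (genMat K m n)) := by
  intro A B _ _ Y
  rw [eval_bigF, eval_bigF, bigF, bigMat_conj, Matrix.det_mul, Matrix.det_mul, bigF,
    Matrix.det_kronecker, Matrix.det_kronecker]
  have hA : (A.transpose.map (MvPolynomial.C (σ := SV m D d))).det = MvPolynomial.C A.det := by
    rw [← Matrix.det_transpose A]
    exact (RingHom.map_det _ _).symm
  have hB : (B.map (MvPolynomial.C (σ := SV m D d))).det = MvPolynomial.C B.det :=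
    (RingHom.map_det _ _).symm
  rw [hA, hB]
  simp only [Matrix.det_one, one_pow, one_mul, Fintype.card_fin]
  rw [← map_pow, ← map_pow, mul_right_comm, ← map_mul, MvPolynomial.coeff_C_mul, mul_pow]

lemma IsF.sub {F G : MvPolynomial (XV m n) K} (hF : IsF d F) (hG : IsF d G) : IsF d (F - G) := by
  intro A B hA hB Y
  rw [map_sub, map_sub, hF A B hA hB, hG A B hA hB, mul_sub]

lemma IsF.smul {F : MvPolynomial (XV m n) K} (hF : IsF d F) (c : K) : IsF d (c • F) := by
  intro A B hA hB Y
  rw [MvPolynomial.smul_eval, MvPolynomial.smul_eval, hF A B hA hB]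
  ring

theorem isF_span [Infinite K] {F : MvPolynomial (XV m n) K} (hF : IsF d F) :
    F ∈ Submodule.span K (Set.range fun β : SV m (n*d) d →₀ ℕ => bigF (n*d) d β (genMat K m n)) := by
  classical
  let W : Finset (YV m n →₀ ℕ) := Finset.Iic (Finsupp.equivFunOnFinite.symm (fun _ => d))
  have hW : ∀ {F : MvPolynomial (XV m n) K}, IsF d F → ∀ e ∈ (tilde K m n F).support, e ∈ W := by
    intro F hF e he
    rw [Finset.mem_Iic]
    rintro ⟨b, s, c⟩
    rw [Finsupp.equivFunOnFinite_symm_apply_apply]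
    rw [← colsum hF e he b c]
    exact Finset.single_le_sum (f := fun s => e (b, s, c)) (fun _ _ => Nat.zero_le _) (Finset.mem_univ s)
  suffices H : ∀ (k : ℕ) (F : MvPolynomial (XV m n) K), IsF d F →
      (W.filter fun e => ∃ e' ∈ (tilde K m n F).support, ykey e ≤ ykey e').card ≤ k →
      F ∈ Submodule.span K (Set.range fun β : SV m (n*d) d →₀ ℕ =>
        bigF (n*d) d β (genMat K m n)) from H _ F hF le_rfl
  intro k
  induction k with
  | zero =>
    intro F hF hk
    have h0 : F = 0 := by
      apply tilde_injective (K := K) (m := m) (n := n)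
      rw [map_zero]
      by_contra hne
      obtain ⟨e, he⟩ := Finset.nonempty_iff_ne_empty.2 (fun h => hne (MvPolynomial.support_eq_empty.1 h))
      have : e ∈ (W.filter fun e => ∃ e' ∈ (tilde K m n F).support, ykey e ≤ ykey e') :=
        Finset.mem_filter.2 ⟨hW hF e he, e, he, le_rfl⟩
      rw [Finset.card_eq_zero.1 (Nat.le_zero.1 hk)] at this
      simp at this
    rw [h0]; exact Submodule.zero_mem _
  | succ k ih =>
    intro F hF hk
    by_cases hne : tilde K m n F = 0
    · have h0 : F = 0 := tilde_injective (K := K) (m := m) (n := n) (by rw [hne, map_zero])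
      rw [h0]; exact Submodule.zero_mem _
    obtain ⟨e0, he0, hmax⟩ := Finset.exists_max_image (tilde K m n F).support ykey
      (Finset.nonempty_iff_ne_empty.2 (fun h => hne (MvPolynomial.support_eq_empty.1 h)))
    have hD : ∀ s, tB (ytab e0 false) s n ≤ n*d := by
      intro s
      have : ∀ c ∈ Finset.range n, ytab e0 false s c ≤ d := by
        intro c hc
        unfold ytab
        split_ifs with h
        · rw [← colsum hF e0 he0 false ⟨c, h.2⟩]
          exact Finset.single_le_sum (f := fun s => e0 (false, s, ⟨c, h.2⟩))
            (fun _ _ => Nat.zero_le _) (Finset.mem_univ (⟨s, h.1⟩ : Fin ((m+1)*n)))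
        · exact Nat.zero_le _
      refine (Finset.sum_le_card_nsmul _ _ _ this).trans ?_
      simp
    obtain ⟨β, hβ, hβmax⟩ := lead_bigF (K := K) (D := n*d) e0 (fun b => lead_good hF e0 he0 hmax b)
      (fun s => lead_rows e0 he0 s) hD
    set G := bigF (n*d) d β (genMat K m n) with hG
    set c := MvPolynomial.coeff e0 (tilde K m n F) / MvPolynomial.coeff e0 (tilde K m n G) with hc
    have hF' : IsF d (F - c • G) := hF.sub ((bigF_isF β).smul c)
    have hmem : F - c • G ∈ Submodule.span K (Set.range fun β : SV m (n*d) d →₀ ℕ =>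
        bigF (n*d) d β (genMat K m n)) := by
      apply ih _ hF'
      have hlt : ∀ e' ∈ (tilde K m n (F - c • G)).support, ykey e' < ykey e0 := by
        intro e' he'
        have hco : MvPolynomial.coeff e' (tilde K m n (F - c • G)) =
            MvPolynomial.coeff e' (tilde K m n F) - c * MvPolynomial.coeff e' (tilde K m n G) := by
          rw [map_sub, map_smul, MvPolynomial.coeff_sub, MvPolynomial.coeff_smul, smul_eq_mul]
        have hne' := MvPolynomial.mem_support_iff.1 he'
        rw [hco] at hne'
        refine lt_of_le_of_ne ?_ ?_
        · by_cases h1 : e' ∈ (tilde K m n F).support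
          · exact hmax e' h1
          · by_cases h2 : e' ∈ (tilde K m n G).support
            · exact hβmax e' h2
            · rw [MvPolynomial.notMem_support_iff] at h1 h2
              rw [h1, h2] at hne'
              simp at hne'
        · intro h
          rw [ykey_injective h] at hne'
          apply hne'
          rw [hc]
          field_simp
          simp
      refine Nat.le_of_lt_succ (lt_of_lt_of_le (Finset.card_lt_card ?_) hk)
      rw [Finset.ssubset_iff_of_subset]
      · refine ⟨e0, Finset.mem_filter.2 ⟨hW hF e0 he0, e0, he0, le_rfl⟩, ?_⟩
        intro h
        obtain ⟨-, e', he', hle⟩ := Finset.mem_filter.1 h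
        exact absurd hle (not_le_of_gt (hlt e' he'))
      · intro e he
        obtain ⟨h1, e', he', hle⟩ := Finset.mem_filter.1 he
        exact Finset.mem_filter.2 ⟨h1, e0, he0, hle.trans (hlt e' he').le⟩
    have : F = (F - c • G) + c • G := by abel
    rw [this]
    exact Submodule.add_mem _ hmem (Submodule.smul_mem _ _ (Submodule.subset_span ⟨β, rfl⟩))
end


section
variable {K : Type} [Field K] [Infinite K] {m n d : ℕ}

/-- conjugation invariance, pointwise -/
def ConjInv (f : MvPolynomial (Fin m × Fin n × Fin n) K) : Prop :=
  ∀ (A : Matrix (Fin n) (Fin n) K), A.det ≠ 0 → ∀ Y : Fin m → Matrix (Fin n) (Fin n) K,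
    MvPolynomial.eval (matCoords fun i => A * Y i * A⁻¹) f = MvPolynomial.eval (matCoords Y) f

lemma eval_smul_homog {σ : Type*} {k : ℕ} {g : MvPolynomial σ K} (hg : g.IsHomogeneous k)
    (t : K) (v : σ → K) :
    MvPolynomial.eval (fun x => t * v x) g = t ^ k * MvPolynomial.eval v g := by
  rw [MvPolynomial.eval_eq, MvPolynomial.eval_eq, Finset.mul_sum]
  refine Finset.sum_congr rfl fun e he => ?_
  have h := hg (MvPolynomial.mem_support_iff.1 he)
  have h2 : ∑ i ∈ e.support, e i = k := by
    rw [← h, Finsupp.weight_apply, Finsupp.sum]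
    simp
  rw [← h2, ← Finset.prod_pow_eq_pow_sum]
  simp only [mul_pow, Finset.prod_mul_distrib]
  ring

lemma ConjInv.comp {f : MvPolynomial (Fin m × Fin n × Fin n) K} (hf : ConjInv f) (k : ℕ) :
    ConjInv (MvPolynomial.homogeneousComponent k f) := by
  intro A hA Y
  have hexp : ∀ (v : Fin m × Fin n × Fin n → K) (t : K), MvPolynomial.eval (fun x => t * v x) f =
      ((∑ i ∈ Finset.range (f.totalDegree + 1), Polynomial.monomial i
        (MvPolynomial.eval v (MvPolynomial.homogeneousComponent i f))) : Polynomial K).eval t := by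
    intro v t
    conv_lhs => rw [← MvPolynomial.sum_homogeneousComponent f]
    rw [map_sum, Polynomial.eval_finsetSum]
    refine Finset.sum_congr rfl fun i _ => ?_
    rw [eval_smul_homog (MvPolynomial.homogeneousComponent_isHomogeneous i f),
      Polynomial.eval_monomial, mul_comm]
  by_cases hk : k < f.totalDegree + 1
  swap
  · rw [MvPolynomial.homogeneousComponent_eq_zero _ _ (by omega)]; simp
  have hpoly : (∑ i ∈ Finset.range (f.totalDegree + 1), Polynomial.monomial i
        (MvPolynomial.eval (matCoords fun i => A * Y i * A⁻¹)
          (MvPolynomial.homogeneousComponent i f)) : Polynomial K) =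
      ∑ i ∈ Finset.range (f.totalDegree + 1), Polynomial.monomial i
        (MvPolynomial.eval (matCoords Y) (MvPolynomial.homogeneousComponent i f)) := by
    refine Polynomial.funext fun t => ?_
    rw [← hexp, ← hexp]
    have h := hf A hA (fun i => t • Y i)
    have e1 : (fun x => t * matCoords (fun i => A * Y i * A⁻¹) x) =
        matCoords fun i => A * t • Y i * A⁻¹ := by
      funext x
      simp [matCoords]
    have e2 : (fun x => t * matCoords Y x) = matCoords fun i => t • Y i := by
      funext x
      simp [matCoords]
    rw [e1, e2, h]
  have := congrArg (fun p => p.coeff k) hpoly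
  simpa [Polynomial.finsetSum_coeff, Polynomial.coeff_monomial, hk] using this

/-- the form attached to `f` -/
noncomputable def toF (f : MvPolynomial (Fin m × Fin n × Fin n) K) : MvPolynomial (XV m n) K :=
  MvPolynomial.aeval (fun p : Fin m × Fin n × Fin n =>
    ((genMat K m n 0).adjugate * genMat K m n p.1.succ) p.2.1 p.2.2) f

lemma eval_toF (f : MvPolynomial (Fin m × Fin n × Fin n) K)
    (Y : Fin (m+1) → Matrix (Fin n) (Fin n) K) :
    MvPolynomial.eval (matCoords Y) (toF f) =
      MvPolynomial.eval (matCoords fun i : Fin m => (Y 0).adjugate * Y i.succ) f := by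
  rw [toF, mv_eval_aeval]
  have hg : ∀ i, (MvPolynomial.eval (matCoords Y)).mapMatrix (genMat K m n i) = Y i := by
    intro i
    ext c c'
    simp [genMat, matCoords]
  congr 2
  funext ⟨i, c, c'⟩
  have : (MvPolynomial.eval (matCoords Y)).mapMatrix ((genMat K m n 0).adjugate * genMat K m n i.succ)
      = (Y 0).adjugate * Y i.succ := by
    rw [map_mul, RingHom.map_adjugate, hg, hg]
  exact congrFun (congrFun this c) c'

lemma toF_isF {f : MvPolynomial (Fin m × Fin n × Fin n) K} (hf : ConjInv f)
    (hd : f.IsHomogeneous d) : IsF d (toF f) := by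
  intro A B hA hB Y
  rw [eval_toF, eval_toF, ← hf B⁻¹ (by rw [Matrix.det_nonsing_inv]; simpa using hB)
      (fun i : Fin m => (Y 0).adjugate * Y i.succ),
    ← eval_smul_homog hd]
  congr 2
  funext ⟨i, c, c'⟩
  have hBu : IsUnit B.det := isUnit_iff_ne_zero.2 hB
  have h : (A.transpose * Y 0 * B).adjugate * (A.transpose * Y i.succ * B) =
      (A.det * B.det) • (B⁻¹ * ((Y 0).adjugate * Y i.succ) * B⁻¹⁻¹) := by
    rw [Matrix.adjugate_mul_distrib, Matrix.adjugate_mul_distrib, Matrix.nonsing_inv_nonsing_inv _ hBu]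
    have hadj : B.adjugate = B.det • B⁻¹ := by
      rw [Matrix.inv_def, smul_smul, Ring.mul_inverse_cancel _ hBu, one_smul]
    calc B.adjugate * ((Y 0).adjugate * A.transpose.adjugate) * (A.transpose * Y i.succ * B)
        = B.adjugate * (Y 0).adjugate * (A.transpose.adjugate * A.transpose) * Y i.succ * B := by
          simp only [mul_assoc]
      _ = _ := by
          rw [Matrix.adjugate_mul, hadj, Matrix.det_transpose]
          simp only [Matrix.smul_mul, Matrix.mul_smul, smul_smul, mul_one, mul_assoc]
  exact congrFun (congrFun h c) c'

/-- generic `m`-tuple -/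
noncomputable def gm (K : Type) [Field K] (m n : ℕ) (i : Fin m) :
    Matrix (Fin n) (Fin n) (MvPolynomial (Fin m × Fin n × Fin n) K) :=
  Matrix.of fun j k => MvPolynomial.X (i, j, k)

/-- with an identity in front -/
noncomputable def gm1 (K : Type) [Field K] (m n : ℕ) :
    Fin (m+1) → Matrix (Fin n) (Fin n) (MvPolynomial (Fin m × Fin n × Fin n) K) :=
  Fin.cons 1 (gm K m n)

/-- specialise the zeroth matrix to the identity -/
noncomputable def spec (K : Type) [Field K] (m n : ℕ) :
    MvPolynomial (XV m n) K →ₐ[K] MvPolynomial (Fin m × Fin n × Fin n) K :=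
  MvPolynomial.aeval fun p => gm1 K m n p.1 p.2.1 p.2.2

lemma spec_toF (f : MvPolynomial (Fin m × Fin n × Fin n) K) : spec K m n (toF f) = f := by
  refine MvPolynomial.funext fun v => ?_
  rw [spec, mv_eval_aeval]
  have h : (fun p : XV m n => MvPolynomial.eval v (gm1 K m n p.1 p.2.1 p.2.2)) =
      matCoords (Fin.cons 1 fun i => Matrix.of fun c c' => v (i, c, c') :
        Fin (m+1) → Matrix (Fin n) (Fin n) K) := by
    funext ⟨i, c, c'⟩
    refine Fin.cases ?_ (fun i => ?_) i
    · by_cases hc : c = c' <;> simp [gm1, matCoords, Matrix.one_apply, hc]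
    · simp [gm1, matCoords, gm]
  rw [h, eval_toF]
  congr 2
  funext ⟨i, c, c'⟩
  simp [matCoords]

lemma spec_bigF (D : ℕ) (β : SV m D d →₀ ℕ) :
    spec K m n (bigF D d β (genMat K m n)) = bigF D d β (gm1 K m n) := by
  have h := bigF_map (spec K m n).toRingHom D d β (genMat K m n)
  refine h.trans ?_
  congr 1
  funext i
  ext c c'
  simp [genMat, spec]

lemma gm1_word (w : List (Fin (m+1))) :
    ∃ w' : List (Fin m), (w.map (gm1 K m n)).prod = (w'.map (gm K m n)).prod := by
  induction w with
  | nil => exact ⟨[], by simp⟩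
  | cons a w ih =>
    obtain ⟨w', h⟩ := ih
    refine Fin.cases ?_ (fun i => ?_) a
    · exact ⟨w', by rw [List.map_cons, List.prod_cons, h]; simp [gm1]⟩
    · exact ⟨i :: w', by rw [List.map_cons, List.prod_cons, h]; simp [gm1]⟩

theorem conjInv_mem {f : MvPolynomial (Fin m × Fin n × Fin n) K} (hf : ConjInv f)
    (S : Subalgebra K (MvPolynomial (Fin m × Fin n × Fin n) K))
    (hS : ∀ w : List (Fin m), w ≠ [] → ∀ s, ((w.map (gm K m n)).prod.charpoly).coeff s ∈ S) :
    f ∈ S := by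
  have hrev : ∀ (w : List (Fin m)) (k : ℕ), (w.map (gm K m n)).prod.charpolyRev.coeff k ∈ S := by
    intro w k
    by_cases hw : w = []
    · subst hw
      have h := charpolyRev_map (MvPolynomial.C (σ := Fin m × Fin n × Fin n))
        (1 : Matrix (Fin n) (Fin n) K)
      rw [Matrix.map_one _ (map_zero _) (map_one _)] at h
      rw [List.map_nil, List.prod_nil, h, Polynomial.coeff_map]
      exact S.algebraMap_mem _
    · rw [← Matrix.reverse_charpoly, Polynomial.coeff_reverse]
      exact hS w hw _
  have hbig : ∀ (d D : ℕ) (β : SV m D d →₀ ℕ), bigF D d β (gm1 K m n) ∈ S := by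
    intro d D β
    refine bigF_mem D d β (gm1 K m n) S.toSubring fun w k => ?_
    obtain ⟨w', h⟩ := gm1_word (K := K) (n := n) w
    rw [h]
    exact hrev w' k
  rw [← MvPolynomial.sum_homogeneousComponent f]
  refine S.sum_mem fun d _ => ?_
  have h1 := isF_span (toF_isF (hf.comp d) (MvPolynomial.homogeneousComponent_isHomogeneous d f))
  have h2 : Submodule.span K (Set.range fun β : SV m (n*d) d →₀ ℕ =>
      bigF (n*d) d β (genMat K m n)) ≤ (Subalgebra.toSubmodule S).comap (spec K m n).toLinearMap := by
    rw [Submodule.span_le]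
    rintro _ ⟨β, rfl⟩
    change spec K m n (bigF (n*d) d β (genMat K m n)) ∈ S
    rw [spec_bigF]
    exact hbig _ _ _
  have h3 : spec K m n (toF (MvPolynomial.homogeneousComponent d f)) ∈ S := h2 h1
  rwa [spec_toF] at h3
end


open MvPolynomial Matrix

lemma map_generic_prod {K : Type} [Field K] {n m : ℕ} (Y : Fin m → Matrix (Fin n) (Fin n) K)
    (w : List (Fin m)) :
    ((w.map fun i => Matrix.of
        fun j k : Fin n => (X (i, j, k) : MvPolynomial (Fin m × Fin n × Fin n) K)).prod).map
      (aeval (matCoords Y) : MvPolynomial (Fin m × Fin n × Fin n) K →ₐ[K] K) = (w.map Y).prod := by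
  induction w with
  | nil => simp
  | cons a w ih =>
    simp only [List.map_cons, List.prod_cons]
    rw [Matrix.map_mul, ih]
    congr 1
    ext j k
    simp [matCoords]

lemma conj_prod {K : Type} [Field K] {n m : ℕ} (A : GeneralLinearGroup (Fin n) K)
    (Y : Fin m → Matrix (Fin n) (Fin n) K) (w : List (Fin m)) :
    (w.map fun i => A.val * Y i * (A⁻¹).val).prod = A.val * (w.map Y).prod * (A⁻¹).val := by
  have h1 : (A⁻¹).val * A.val = 1 := by rw [← Units.val_mul]; simp
  have h2 : A.val * (A⁻¹).val = 1 := by rw [← Units.val_mul]; simp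
  induction w with
  | nil => simp only [List.map_nil, List.prod_nil, mul_one, h2]
  | cons a w ih =>
    simp only [List.map_cons, List.prod_cons]
    rw [ih]
    calc A.val * Y a * (A⁻¹).val * (A.val * (w.map Y).prod * (A⁻¹).val)
        = A.val * Y a * ((A⁻¹).val * A.val) * (w.map Y).prod * (A⁻¹).val := by
          simp only [mul_assoc]
      _ = _ := by rw [h1]; simp only [mul_assoc, one_mul]

lemma eval_word_coeff {K : Type} [Field K] {n m : ℕ} (w : List (Fin m)) (s : ℕ)
    (Y : Fin m → Matrix (Fin n) (Fin n) K) :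
    (aeval (matCoords Y) : MvPolynomial (Fin m × Fin n × Fin n) K →ₐ[K] K)
        (((w.map fun i => Matrix.of
          fun j k : Fin n => (X (i, j, k) : MvPolynomial (Fin m × Fin n × Fin n) K)).prod.charpoly).coeff s)
      = ((w.map Y).prod.charpoly).coeff s := by
  rw [← map_generic_prod Y w]
  generalize ((w.map fun i => Matrix.of
      fun j k : Fin n => (X (i, j, k) : MvPolynomial (Fin m × Fin n × Fin n) K)).prod) = M
  generalize (aeval (matCoords Y) : MvPolynomial (Fin m × Fin n × Fin n) K →ₐ[K] K) = φ
  have := Matrix.charpoly_map M (φ : MvPolynomial (Fin m × Fin n × Fin n) K →+* K)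
  have h2 : ((M.map φ).charpoly).coeff s = (M.charpoly.map (φ : MvPolynomial (Fin m × Fin n × Fin n) K →+* K)).coeff s :=
    congrArg (fun p => p.coeff s) this
  rw [h2, Polynomial.coeff_map]
  rfl

lemma mem_invariants {K : Type} [Field K] {n m : ℕ} (f : MvPolynomial (Fin m × Fin n × Fin n) K)
    (h : ∀ (A : GeneralLinearGroup (Fin n) K) (Y : Fin m → Matrix (Fin n) (Fin n) K),
      aeval (matCoords fun i => A.val * Y i * (A⁻¹).val) f = aeval (matCoords Y) f) :
    f ∈ matrixInvariants K n m := by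
  simp only [matrixInvariants, Algebra.mem_iInf, AlgHom.mem_equalizer]
  exact h

lemma word_coeff_mem {K : Type} [Field K] {n m : ℕ} (w : List (Fin m)) (s : ℕ) :
    (((w.map fun i => Matrix.of
          fun j k : Fin n => (X (i, j, k) : MvPolynomial (Fin m × Fin n × Fin n) K)).prod.charpoly).coeff s)
      ∈ matrixInvariants K n m := by
  refine mem_invariants _ fun A Y => ?_
  have e : ((w.map fun i => A.val * Y i * (A⁻¹).val).prod).charpoly = (w.map Y).prod.charpoly := by
    rw [conj_prod, Matrix.coe_units_inv]
    exact Matrix.charpoly_units_conj A _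
  exact (eval_word_coeff w s _).trans ((congrArg (fun p => p.coeff s) e).trans
    (eval_word_coeff w s Y).symm)

/-- The easy inclusion: characteristic coefficients of words are invariant. -/
lemma adjoin_le_invariants (K : Type) [Field K] (n m : ℕ) :
    Algebra.adjoin K
        {f : MvPolynomial (Fin m × Fin n × Fin n) K |
          ∃ w : List (Fin m), w ≠ [] ∧ ∃ s : ℕ,
            f = ((w.map fun i => Matrix.of
                  fun j k : Fin n => (X (i, j, k) : MvPolynomial (Fin m × Fin n × Fin n) K)).prod.charpoly).coeff s}
      ≤ matrixInvariants K n m := by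
  refine Algebra.adjoin_le ?_
  rintro f ⟨w, -, s, rfl⟩
  exact word_coeff_mem w s

/-- **Donkin.** In arbitrary characteristic, `S(n,m)` is generated as a
`K`-algebra by the characteristic coefficients `σ_s(X_{i_1} ⋯ X_{i_k})` of products of the
generic matrices, where `det(t • 1 - A) = ∑ j, σ_j(A) t^j`. -/
theorem stmt_19 (K : Type) [Field K] [IsAlgClosed K] (n m : ℕ) (hn : 0 < n) (hm : 0 < m) :
    Algebra.adjoin K
        {f : MvPolynomial (Fin m × Fin n × Fin n) K |
          ∃ w : List (Fin m), w ≠ [] ∧ ∃ s : ℕ,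
            f = ((w.map fun i => Matrix.of
                  fun j k : Fin n => (X (i, j, k) : MvPolynomial (Fin m × Fin n × Fin n) K)).prod.charpoly).coeff s}
      = matrixInvariants K n m := by
  refine le_antisymm (adjoin_le_invariants K n m) ?_
  intro f hf
  have : Infinite K := IsAlgClosed.instInfinite
  refine conjInv_mem (f := f) ?_ _ ?_
  · intro A hA Y
    simp only [matrixInvariants, Algebra.mem_iInf, AlgHom.mem_equalizer] at hf
    have h := hf (Matrix.GeneralLinearGroup.mkOfDetNeZero A hA) Y
    have hv : (Matrix.GeneralLinearGroup.mkOfDetNeZero A hA).val = A := rfl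
    have hi : ((Matrix.GeneralLinearGroup.mkOfDetNeZero A hA)⁻¹).val = A⁻¹ := by
      rw [Matrix.coe_units_inv, hv]
    rw [hi, hv] at h
    exact h
  · intro w hw s
    exact Algebra.subset_adjoin ⟨w, hw, s, rfl⟩
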